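/- Let m ≥ 1, n ≥ 1, D ≥ 1 be integers. For every positive integer N there exists a constant γ depending only on m, n, D, N such that the following holds. Let S ⊆ ℝ^n be a finite set with |S| ≤ N and diameter at most 1, and for each x ∈ S let G(x) ⊆ 𝒫⃗ be convex. Suppose that for every subset S′ ⊆ S with |S′| ≤ 2^(D·binom(n+m−1, n)) there exists F^{S′} ∈ C^m(ℝ^n,ℝ^D) with ‖F^{S′}‖_{C^m(ℝ^n,ℝ^D)} ≤ 1 and J_x F^{S′} ∈ G(x) for all x ∈ S′. Then there exists F ∈ C^m(ℝ^n,ℝ^D) with ‖F‖_{C^m(ℝ^n,ℝ^D)} ≤ γ and J_x F ∈ G(x) for all x ∈ S. -/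

import Mathlib

open scoped BigOperators Classical

noncomputable section

/-- `En n` is Euclidean space `ℝ^n`. -/
abbrev En (n : ℕ) : Type := EuclideanSpace ℝ (Fin n)

/-- First-order partial derivative `∂_i f` in the `i`-th coordinate direction. -/
noncomputable def pd1 {n : ℕ} (i : Fin n) (f : En n → ℝ) : En n → ℝ :=
  fun x => fderiv ℝ f x (EuclideanSpace.single i 1)

/-- Higher-order partial derivative `∂^α f` for a multi-index `α`. -/
noncomputable def pdalpha {n : ℕ} (α : Fin n → ℕ) (f : En n → ℝ) : En n → ℝ :=
  (List.finRange n).foldr (fun i g => (pd1 i)^[α i] g) f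

/-- First-order partial derivative within a set `s`. -/
noncomputable def pd1W {n : ℕ} (s : Set (En n)) (i : Fin n) (f : En n → ℝ) : En n → ℝ :=
  fun x => fderivWithin ℝ f s x (EuclideanSpace.single i 1)

/-- Higher-order partial derivative `∂^α f` within a set `s`. -/
noncomputable def pdalphaW {n : ℕ} (s : Set (En n)) (α : Fin n → ℕ) (f : En n → ℝ) : En n → ℝ :=
  (List.finRange n).foldr (fun i g => (pd1W s i)^[α i] g) f

/-- `∂^α` of a multivariate polynomial (formal derivative). -/
noncomputable def polyPD {n : ℕ} (α : Fin n → ℕ) (p : MvPolynomial (Fin n) ℝ) :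
    MvPolynomial (Fin n) ℝ :=
  (List.finRange n).foldr (fun i q => (fun r => MvPolynomial.pderiv i r)^[α i] q) p

/-- The value `∂^α p (x)` of the `α`-th derivative of a polynomial at `x`. -/
noncomputable def polyPDval {n : ℕ} (α : Fin n → ℕ) (p : MvPolynomial (Fin n) ℝ) (x : En n) : ℝ :=
  MvPolynomial.eval (fun i => x i) (polyPD α p)

/-- The `(m-1)`-jet (Taylor polynomial of degree `≤ m-1`) of `f` at `x`. -/
noncomputable def jetScalar (m : ℕ) {n : ℕ} (f : En n → ℝ) (x : En n) :
    MvPolynomial (Fin n) ℝ :=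
  ∑ α ∈ (Finset.univ : Finset (Fin n → Fin m)).filter (fun α => (∑ i, (α i : ℕ)) ≤ m - 1),
    MvPolynomial.C (pdalpha (fun i => (α i : ℕ)) f x / ((∏ i, Nat.factorial (α i : ℕ) : ℕ) : ℝ))
      * ∏ i, (MvPolynomial.X i - MvPolynomial.C (x i)) ^ ((α i : ℕ))

/-- The `(m-1)`-jet of `f` at `x`, with derivatives taken within a set `s`. -/
noncomputable def jetScalarW (m : ℕ) {n : ℕ} (s : Set (En n)) (f : En n → ℝ) (x : En n) :
    MvPolynomial (Fin n) ℝ :=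
  ∑ α ∈ (Finset.univ : Finset (Fin n → Fin m)).filter (fun α => (∑ i, (α i : ℕ)) ≤ m - 1),
    MvPolynomial.C (pdalphaW s (fun i => (α i : ℕ)) f x / ((∏ i, Nat.factorial (α i : ℕ) : ℕ) : ℝ))
      * ∏ i, (MvPolynomial.X i - MvPolynomial.C (x i)) ^ ((α i : ℕ))

/-- The vector-valued `(m-1)`-jet `J_x F ∈ 𝒫⃗` of `F : ℝ^n → ℝ^D` at `x`. -/
noncomputable def jetD (m : ℕ) {n D : ℕ} (F : En n → Fin D → ℝ) (x : En n) :
    Fin D → MvPolynomial (Fin n) ℝ :=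
  fun j => jetScalar m (fun y => F y j) x

/-- The vector-valued `(m-1)`-jet of `F` at `x`, derivatives within `s`. -/
noncomputable def jetDW (m : ℕ) {n D : ℕ} (s : Set (En n)) (F : En n → Fin D → ℝ) (x : En n) :
    Fin D → MvPolynomial (Fin n) ℝ :=
  fun j => jetScalarW m s (fun y => F y j) x

/-- Truncation of a polynomial to total degree `≤ k`. -/
noncomputable def truncDeg {n : ℕ} (k : ℕ) (p : MvPolynomial (Fin n) ℝ) :
    MvPolynomial (Fin n) ℝ :=
  ∑ s ∈ p.support.filter (fun s => (s.sum fun _ e => e) ≤ k),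
    MvPolynomial.monomial s (MvPolynomial.coeff s p)

/-- The degree-`k` Taylor truncation of a polynomial at `x` (the jet `J_x p` of order `k`). -/
noncomputable def taylorTrunc {n : ℕ} (k : ℕ) (x : En n) (p : MvPolynomial (Fin n) ℝ) :
    MvPolynomial (Fin n) ℝ :=
  MvPolynomial.bind₁ (fun i => MvPolynomial.X i - MvPolynomial.C (x i))
    (truncDeg k (MvPolynomial.bind₁ (fun i => MvPolynomial.X i + MvPolynomial.C (x i)) p))

/-- The ring multiplication `p ⊙_x q := J_x(pq)` on degree-`k` jets at `x`. -/
noncomputable def odot {n : ℕ} (k : ℕ) (x : En n) (p q : MvPolynomial (Fin n) ℝ) :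
    MvPolynomial (Fin n) ℝ :=
  taylorTrunc k x (p * q)

/-- `(Γ x M)_{x ∈ E, M > 0}` is a shape field with jets of degree `≤ k` and `d` components:
each `Γ x M` is a convex set of `d`-tuples of polynomials of degree `≤ k`, monotone in `M`. -/
def IsShapeField {N : ℕ} (k d : ℕ) (E : Finset (En N))
    (Γ : En N → ℝ → Set (Fin d → MvPolynomial (Fin N) ℝ)) : Prop :=
  (∀ x ∈ E, ∀ M : ℝ, 0 < M → Convex ℝ (Γ x M)) ∧
  (∀ x ∈ E, ∀ M : ℝ, 0 < M → ∀ P ∈ Γ x M, ∀ j, (P j).totalDegree ≤ k) ∧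
  (∀ x ∈ E, ∀ M' M : ℝ, 0 < M' → M' ≤ M → Γ x M' ⊆ Γ x M)

/-- `(C_w, δmax)`-convexity of a shape field with jets of degree `≤ k`. -/
def SFConvex {N : ℕ} (k d : ℕ) (E : Finset (En N))
    (Γ : En N → ℝ → Set (Fin d → MvPolynomial (Fin N) ℝ)) (Cw δmax : ℝ) : Prop :=
  ∀ δ : ℝ, 0 < δ → δ ≤ δmax → ∀ x ∈ E, ∀ M : ℝ, 0 < M →
    ∀ P₁ P₂ : Fin d → MvPolynomial (Fin N) ℝ, P₁ ∈ Γ x M → P₂ ∈ Γ x M →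
    ∀ Q₁ Q₂ : MvPolynomial (Fin N) ℝ, Q₁.totalDegree ≤ k → Q₂.totalDegree ≤ k →
    (∀ α : Fin N → ℕ, (∑ i, α i) ≤ k → ∀ j,
      |polyPDval α (P₁ j - P₂ j) x| ≤ M * δ ^ (k + 1 - ∑ i, α i)) →
    (∀ α : Fin N → ℕ, (∑ i, α i) ≤ k →
      |polyPDval α Q₁ x| ≤ δ ^ (-((∑ i, α i : ℕ) : ℤ)) ∧
      |polyPDval α Q₂ x| ≤ δ ^ (-((∑ i, α i : ℕ) : ℤ))) →
    odot k x Q₁ Q₁ + odot k x Q₂ Q₂ = 1 →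
    (fun j => odot k x (odot k x Q₁ Q₁) (P₁ j) + odot k x (odot k x Q₂ Q₂) (P₂ j))
      ∈ Γ x (Cw * M)

/-- `‖(P^x)_{x ∈ S}‖_{Ẇ^m(S)} ≤ M` : the homogeneous Whitney seminorm bound. -/
def WSemiLE (m : ℕ) {N d : ℕ} (S : Finset (En N))
    (P : En N → Fin d → MvPolynomial (Fin N) ℝ) (M : ℝ) : Prop :=
  ∀ x ∈ S, ∀ y ∈ S, x ≠ y → ∀ α : Fin N → ℕ, (∑ i, α i) ≤ m - 1 → ∀ j,
    |polyPDval α (P x j - P y j) x| ≤ M * dist x y ^ (m - ∑ i, α i)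

/-- The homogeneous Whitney seminorm `‖(P^x)_{x ∈ S}‖_{Ẇ^m(S)}`. -/
noncomputable def WNormHomog (m : ℕ) {N d : ℕ} (S : Finset (En N))
    (P : En N → Fin d → MvPolynomial (Fin N) ℝ) : ℝ :=
  sSup {r : ℝ | ∃ x ∈ S, ∃ y ∈ S, x ≠ y ∧ ∃ α : Fin N → ℕ, (∑ i, α i) ≤ m - 1 ∧ ∃ j : Fin d,
    r = |polyPDval α (P x j - P y j) x| / dist x y ^ (m - ∑ i, α i)}

/-- The lower-order part of the Whitney norm. -/
noncomputable def WNormLow (m : ℕ) {N d : ℕ} (S : Finset (En N))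
    (P : En N → Fin d → MvPolynomial (Fin N) ℝ) : ℝ :=
  sSup {r : ℝ | ∃ x ∈ S, ∃ α : Fin N → ℕ, (∑ i, α i) ≤ m - 1 ∧ ∃ j : Fin d,
    r = |polyPDval α (P x j) x|}

/-- The Whitney norm `‖(P^x)_{x ∈ S}‖_{W^m(S)}`. -/
noncomputable def WNormFull (m : ℕ) {N d : ℕ} (S : Finset (En N))
    (P : En N → Fin d → MvPolynomial (Fin N) ℝ) : ℝ :=
  WNormLow m S P + WNormHomog m S P

/-- `‖F‖_{C^m} ≤ M`: all partials of order `≤ m` of all components bounded by `M`. -/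
def CmLE (m : ℕ) {n D : ℕ} (F : En n → Fin D → ℝ) (M : ℝ) : Prop :=
  ∀ α : Fin n → ℕ, (∑ i, α i) ≤ m → ∀ x : En n, ∀ j, |pdalpha α (fun y => F y j) x| ≤ M

/-- `‖F‖_{Ċ^m} ≤ M`: all partials of order `= m` of all components bounded by `M`. -/
def CmHomogLE (m : ℕ) {n D : ℕ} (F : En n → Fin D → ℝ) (M : ℝ) : Prop :=
  ∀ α : Fin n → ℕ, (∑ i, α i) = m → ∀ x : En n, ∀ j, |pdalpha α (fun y => F y j) x| ≤ M

/-- `‖F‖_{C^{m-1,1}} ≤ M`. -/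
def Cm11LE (m : ℕ) {n D : ℕ} (F : En n → Fin D → ℝ) (M : ℝ) : Prop :=
  (∀ α : Fin n → ℕ, (∑ i, α i) ≤ m - 1 → ∀ x : En n, ∀ j,
    |pdalpha α (fun y => F y j) x| ≤ M) ∧
  (∀ α : Fin n → ℕ, (∑ i, α i) = m - 1 → ∀ j, ∀ x y : En n,
    |pdalpha α (fun z => F z j) x - pdalpha α (fun z => F z j) y| ≤ M * dist x y)

/-- A closed cube in `ℝ^n` with lower corner `a` and side length `δ`. -/
def cube {n : ℕ} (a : En n) (δ : ℝ) : Set (En n) := {y | ∀ i, a i ≤ y i ∧ y i ≤ a i + δ}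

/-- The embedding `ℝ^n → ℝ^{n+D}`, `x ↦ (x, 0)`. -/
noncomputable def embed (n D : ℕ) (x : En n) : En (n + D) :=
  (EuclideanSpace.equiv (Fin (n + D)) ℝ).symm
    (Fin.append (fun i : Fin n => x i) (fun _ : Fin D => (0 : ℝ)))

/-- The projection `ℝ^{n+D} → ℝ^n`, `(x, ξ) ↦ x`. -/
noncomputable def projn (n D : ℕ) (z : En (n + D)) : En n :=
  (EuclideanSpace.equiv (Fin n) ℝ).symm (fun i => z (Fin.castAdd D i))

/-- Restriction of a polynomial on `ℝ^{n+D}` to `ℝ^n × {0}`, as a polynomial on `ℝ^n`. -/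
noncomputable def restrict0 (n D : ℕ) (p : MvPolynomial (Fin (n + D)) ℝ) :
    MvPolynomial (Fin n) ℝ :=
  MvPolynomial.aeval
    (Fin.append (fun i : Fin n => (MvPolynomial.X i : MvPolynomial (Fin n) ℝ))
      (fun _ : Fin D => 0)) p

/-
Fix a finite set `S` with more than `2 ^ dim 𝒫⃗` points. If jets can be selected on `S` minus any
one point, with norm `M`, then they can be selected on `S` with norm `C M`; the theorem follows by
induction on the number of points.

Cluster `S` into a binary tree: the two children of a vertex are separated at the scale of their
union. Up to constants, a family of jets on `S` extends to a `C^m` function of norm `M` iff it is a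
sum along the branches of polynomials, one for each vertex, whose coefficients at the scale of the
vertex are at most `M`: one direction is Taylor's theorem, the other one uses cutoff functions. By
duality, the dual of this norm on families `μ x • ξ x` of functionals, `x ∈ S`, is the sum over the
vertices `v` of the size, at the scale of `v`, of the flow `∑ μ x • ξ x` through `v`.

If no selection existed, there would be functionals `ξ` of total flow norm `1` separating the convex
sets from the families of norm `C M`. As there are more than `2 ^ dim 𝒫⃗` leaves, the weight `1`
splits as `w + (1 - w)` with `0 ≤ w ≤ 1`, both summands of bounded flow norm, and both vanishing at
some leaf. Combining with weights `w` and `1 - w` two selections of norm `M`, each failing only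
where its weight vanishes, contradicts the separation.

To find `w`, one maintains along the tree a set `X` of leaves on which weights can be prescribed
at bounded cost together with a space `E` of total flows that can then still be realised freely.
Two subtrees are joined by keeping both sets but only the larger one of the two spaces, which
preserves `#leaves ≤ (#X + 1) * 2 ^ dim E`; so `X` is nonempty when `#leaves > 2 ^ dim 𝒫⃗`.
-/

section Pivot

variable {V α : Type*} [AddCommGroup V] [Module ℝ V]

/-- `v` is approximated, modulo the subspace `E` and up to an error `K` in the seminorm `p`, by a
combination of the `η j`, `j ∈ J`, with coefficients at most `K`. -/
def NearCombination (p : Seminorm ℝ V) (E : Submodule ℝ V) (η : α → V) (J : Finset α) (K : ℝ)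
    (v : V) : Prop :=
  ∃ e ∈ E, ∃ a : α → ℝ, (∀ j ∈ J, |a j| ≤ K) ∧ p (v - (e + ∑ j ∈ J, a j • η j)) ≤ K

/-- Quantitative linear independence modulo `E`: the coefficients of a combination of the `η j`,
`j ∈ J`, are at most `K` times the seminorm of that combination, whatever is added from `E`. -/
def CoeffBounded (p : Seminorm ℝ V) (E : Submodule ℝ V) (η : α → V) (J : Finset α) (K : ℝ) :
    Prop :=
  ∀ e ∈ E, ∀ a : α → ℝ, ∀ j ∈ J, |a j| ≤ K * p (e + ∑ j ∈ J, a j • η j)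

variable {p : Seminorm ℝ V} {E : Submodule ℝ V} {η : α → V} {J : Finset α} {K : ℝ}

theorem exists_sum_smul_eq_of_mem_span_image {v : V} (hv : v ∈ Submodule.span ℝ (η '' J)) :
    ∃ a : α → ℝ, ∑ j ∈ J, a j • η j = v := by
  obtain ⟨a, rfl⟩ := (Submodule.mem_span_image_finset_iff_exists_fun ℝ).mp hv
  refine ⟨fun j => if h : j ∈ J then a ⟨j, h⟩ else 0, ?_⟩
  rw [← Finset.sum_coe_sort]
  exact Finset.sum_congr rfl fun j _ => by simp

theorem nearCombination_of_mem (hK : 1 ≤ K) {j : α} (hj : j ∈ J) :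
    NearCombination p E η J K (η j) := by
  refine ⟨0, E.zero_mem, Pi.single j 1, fun i _ => ?_, ?_⟩
  · rcases eq_or_ne i j with rfl | h
    · simpa using hK
    · simpa [h] using zero_le_one.trans hK
  · have hsum : ∑ i ∈ J, (Pi.single j 1 : α → ℝ) i • η i = η j := by
      rw [Finset.sum_eq_single_of_mem j hj fun i _ h => by simp [h]]
      simp
    simpa [hsum] using zero_le_one.trans hK

theorem NearCombination.mono {K' : ℝ} {v : V} (h : NearCombination p E η J K v) (hK : K ≤ K') :
    NearCombination p E η J K' v := by
  obtain ⟨e, he, a, ha, hv⟩ := h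
  exact ⟨e, he, a, fun j hj => (ha j hj).trans hK, hv.trans hK⟩

/-- The index removed is one whose coefficient in the violating combination is largest: that
combination expresses `η j` through the others with coefficients at most `1`. -/
theorem exists_erase_nearCombination (hK : 1 ≤ K) (h : ¬ CoeffBounded p E η J K) :
    ∃ j ∈ J, ∀ v, NearCombination p E η J K v → NearCombination p E η (J.erase j) (2 * K) v := by
  simp only [CoeffBounded, not_forall, not_le] at h
  obtain ⟨e, he, a, i, hi, hlt⟩ := h
  obtain ⟨j, hj, hmax⟩ := J.exists_max_image (fun j => |a j|) ⟨i, hi⟩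
  set w := e + ∑ j ∈ J, a j • η j with hw
  have hwj : K * p w < |a j| := hlt.trans_le (hmax i hi)
  have haj : 0 < |a j| := (mul_nonneg (by linarith) (apply_nonneg p w)).trans_lt hwj
  refine ⟨j, hj, ?_⟩
  rintro v ⟨e', he', b, hb, hv⟩
  set t := b j * (a j)⁻¹ with ht
  have ht_abs : |t| = |b j| / |a j| := by rw [ht, abs_mul, abs_inv, div_eq_mul_inv]
  have htj : t * a j = b j := by rw [ht, mul_assoc, inv_mul_cancel₀ (abs_pos.mp haj), mul_one]
  refine ⟨e' - t • e, E.sub_mem he' (E.smul_mem t he), fun i => b i - t * a i, fun i hi => ?_, ?_⟩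
  · have hti : |t * a i| ≤ K := by
      rw [abs_mul, ht_abs, div_mul_eq_mul_div, div_le_iff₀ haj]
      exact mul_le_mul (hb j hj) (hmax i (Finset.mem_of_mem_erase hi)) (abs_nonneg _) (by linarith)
    linarith [abs_sub (b i) (t * a i), hb i (Finset.mem_of_mem_erase hi)]
  · have hsplit : v - (e' - t • e + ∑ i ∈ J.erase j, (b i - t * a i) • η i) =
        v - (e' + ∑ i ∈ J, b i • η i) + t • w := by
      rw [hw, ← Finset.add_sum_erase J (fun i => a i • η i) hj,
        ← Finset.add_sum_erase J (fun i => b i • η i) hj, ← htj]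
      simp only [sub_smul, mul_smul, Finset.sum_sub_distrib, ← Finset.smul_sum]
      module
    have htw : p (t • w) ≤ 1 := by
      rw [map_smul_eq_mul, Real.norm_eq_abs, ht_abs, div_mul_eq_mul_div, div_le_one haj]
      exact (mul_le_mul_of_nonneg_right (hb j hj) (apply_nonneg p w)).trans hwj.le
    rw [hsplit]
    linarith [map_add_le_add p (v - (e' + ∑ i ∈ J, b i • η i)) (t • w)]

theorem exists_subset_coeffBounded (p : Seminorm ℝ V) (E : Submodule ℝ V) (η : α → V)
    (J : Finset α) (hK : 1 ≤ K) :
    ∃ J' ⊆ J, ∃ K', K ≤ K' ∧ K' ≤ 2 ^ J.card * K ∧ CoeffBounded p E η J' K' ∧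
      ∀ v, NearCombination p E η J K v → NearCombination p E η J' K' v := by
  induction hs : J.card generalizing J K with
  | zero =>
    obtain rfl := Finset.card_eq_zero.mp hs
    exact ⟨∅, subset_rfl, K, le_rfl, by simp, by simp [CoeffBounded], fun v => id⟩
  | succ s ih =>
    by_cases hJ : CoeffBounded p E η J K
    · exact ⟨J, subset_rfl, K, le_rfl, le_mul_of_one_le_left (by linarith)
        (one_le_pow₀ one_le_two), hJ, fun v => id⟩
    obtain ⟨j, hj, hnear⟩ := exists_erase_nearCombination hK hJ
    obtain ⟨J', hJ', K', hKK', hK', hbdd, hnear'⟩ :=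
      ih (J.erase j) (K := 2 * K) (by linarith) (by rw [Finset.card_erase_of_mem hj, hs]; rfl)
    exact ⟨J', hJ'.trans (J.erase_subset j), K', by linarith, by rw [pow_succ]; linarith, hbdd,
      fun v hv => hnear' v (hnear v hv)⟩

theorem CoeffBounded.mono {K' : ℝ} (h : CoeffBounded p E η J K) (hK : K ≤ K') :
    CoeffBounded p E η J K' := fun e he a j hj =>
  (h e he a j hj).trans (mul_le_mul_of_nonneg_right hK (apply_nonneg p _))

theorem exists_pivots (p : Seminorm ℝ V) (E : Submodule ℝ V) (η : α → V) {X : Finset α} {s : ℕ}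
    (hX : X.card ≤ s) :
    ∃ J ⊆ X, CoeffBounded p E η J (2 ^ s) ∧ ∀ x ∈ X, NearCombination p E η J (2 ^ s) (η x) := by
  obtain ⟨J, hJ, K, -, hK, hbdd, hnear⟩ := exists_subset_coeffBounded p E η X le_rfl
  replace hK : K ≤ 2 ^ s := by
    rw [mul_one] at hK
    exact hK.trans (pow_le_pow_right₀ one_le_two hX)
  exact ⟨J, hJ, hbdd.mono hK, fun x hx => (hnear _ (nearCombination_of_mem le_rfl hx)).mono hK⟩

theorem CoeffBounded.eq_zero (h : CoeffBounded p E η J K) {e : V} (he : e ∈ E) {a : α → ℝ}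
    (hsum : e + ∑ j ∈ J, a j • η j = 0) {j : α} (hj : j ∈ J) : a j = 0 := by
  simpa [hsum] using h e he a j hj

theorem CoeffBounded.finrank_sup_span [FiniteDimensional ℝ V] (h : CoeffBounded p E η J K) :
    Module.finrank ℝ ↥(E ⊔ Submodule.span ℝ (η '' J)) = Module.finrank ℝ E + J.card := by
  have hindep : LinearIndepOn ℝ η (J : Set α) :=
    linearIndepOn_finset_iff.mpr fun a ha j hj => h.eq_zero E.zero_mem (by rwa [zero_add]) hj
  have hdisj : E ⊓ Submodule.span ℝ (η '' J) = ⊥ := by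
    refine (Submodule.eq_bot_iff _).mpr fun v hv => ?_
    obtain ⟨hvE, hvJ⟩ := Submodule.mem_inf.mp hv
    obtain ⟨a, rfl⟩ := exists_sum_smul_eq_of_mem_span_image hvJ
    exact Finset.sum_eq_zero fun j hj => by
      rw [h.eq_zero (a := a) (E.neg_mem hvE) (neg_add_cancel _) hj, zero_smul]
  have hcard : Module.finrank ℝ (Submodule.span ℝ (η '' J)) = J.card := by
    rw [Set.image_eq_range, finrank_span_eq_card hindep]
    simp
  have := Submodule.finrank_sup_add_finrank_inf_eq E (Submodule.span ℝ (η '' J))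
  rwa [hdisj, finrank_bot, add_zero, hcard] at this

end Pivot

section Certificates

theorem card_succ_mul_two_pow_le {k j d : ℕ} (hj : j ≤ k) :
    (k + 1) * 2 ^ d ≤ (k - j + 1) * 2 ^ (d + j) := by
  obtain ⟨i, rfl⟩ := Nat.exists_eq_add_of_le' hj
  have h2 : j + 1 ≤ 2 ^ j := Nat.lt_two_pow_self
  calc (i + j + 1) * 2 ^ d ≤ (i + 1) * (j + 1) * 2 ^ d := by gcongr; nlinarith
    _ ≤ (i + 1) * 2 ^ j * 2 ^ d := by gcongr
    _ = (i + j - j + 1) * 2 ^ (d + j) := by rw [Nat.add_sub_cancel]; ring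

variable {V α : Type*} [AddCommGroup V] [Module ℝ V]

/-- A certificate for the size of a set of weights `μ : α → ℝ` on a finite set, whose total
`Φ μ ∈ V` is measured by `q` and whose overall size is measured by `ν`. Weights of size at most
`C` and vanishing at the base point `x₀` realise every prescribed value on one point of `X` and `0`
on the others, and weights vanishing on all of `insert x₀ X` realise every total in `E`, at a cost
proportional to the size of that total. -/
structure FlowSystem (Φ : (α → ℝ) →ₗ[ℝ] V) (q : Seminorm ℝ V) (ν : Seminorm ℝ (α → ℝ)) (C : ℝ)
    (x₀ : α) (X : Finset α) (E : Submodule ℝ V) : Prop where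
  base_notMem : x₀ ∉ X
  exists_dual : ∀ y ∈ X, ∃ g : α → ℝ, (∀ z ∈ insert x₀ X, g z = if z = y then 1 else 0) ∧ ν g ≤ C
  exists_lift : ∀ v ∈ E, ∃ f : α → ℝ, (∀ z ∈ insert x₀ X, f z = 0) ∧ Φ f = v ∧ ν f ≤ C * (1 + q v)

namespace FlowSystem

variable {Φ : (α → ℝ) →ₗ[ℝ] V} {p q : Seminorm ℝ V} {ν : Seminorm ℝ (α → ℝ)} {A B C K T : ℝ}
  {x₀ : α} {X J : Finset α} {E : Submodule ℝ V}

theorem mono {C' : ℝ} (h : FlowSystem Φ q ν C x₀ X E) (hC : C ≤ C') :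
    FlowSystem Φ q ν C' x₀ X E where
  base_notMem := h.base_notMem
  exists_dual y hy := by
    obtain ⟨g, hg, hν⟩ := h.exists_dual y hy
    exact ⟨g, hg, hν.trans hC⟩
  exists_lift v hv := by
    obtain ⟨f, hf, hΦ, hν⟩ := h.exists_lift v hv
    exact ⟨f, hf, hΦ, hν.trans
      (mul_le_mul_of_nonneg_right hC (by linarith [apply_nonneg q v]))⟩

theorem exists_dual_insert (h : FlowSystem Φ q ν C x₀ X E) (hC : 0 ≤ C) (hone : ν 1 ≤ 1) {y : α}
    (hy : y ∈ insert x₀ X) :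
    ∃ g : α → ℝ, (∀ z ∈ insert x₀ X, g z = if z = y then 1 else 0) ∧
      ν g ≤ 1 + (X.card + 1) * C := by
  choose! g hg using h.exists_dual
  rcases Finset.mem_insert.mp hy with rfl | hyX
  · have hsum : ν (∑ j ∈ X, g j) ≤ X.card * C := by
      rw [← nsmul_eq_mul]
      exact (Finset.le_sum_of_subadditive ν (map_zero ν).le (map_add_le_add ν) _ _).trans
        (Finset.sum_le_card_nsmul _ _ _ fun j hj => (hg j hj).2)
    refine ⟨1 - ∑ j ∈ X, g j, fun z hz => ?_, ?_⟩
    · have hval : ∑ j ∈ X, g j z = ∑ j ∈ X, if z = j then 1 else 0 :=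
        Finset.sum_congr rfl fun j hj => (hg j hj).1 z hz
      rw [Pi.sub_apply, Pi.one_apply, Finset.sum_apply, hval, Finset.sum_ite_eq]
      rcases Finset.mem_insert.mp hz with rfl | hzX
      · simp [h.base_notMem]
      · simp [hzX, ne_of_mem_of_not_mem hzX h.base_notMem]
    · linarith [map_sub_le_add ν 1 (∑ j ∈ X, g j)]
  · exact ⟨g y, (hg y hyX).1, (hg y hyX).2.trans (by nlinarith [X.card.cast_nonneg (α := ℝ)])⟩

theorem exists_lift_add_sum (h : FlowSystem Φ q ν C x₀ X E) (hB : 0 ≤ B) (hC : 0 ≤ C)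
    (hΦ : ∀ f, q (Φ f) ≤ B * ν f) {g : α → α → ℝ}
    (hg : ∀ y ∈ X, (∀ z ∈ insert x₀ X, g y z = if z = y then 1 else 0) ∧ ν (g y) ≤ C)
    (hJ : J ⊆ X) {s : ℕ} (hs : X.card ≤ s) {e : V} (he : e ∈ E) {a : α → ℝ}
    (ha : ∀ j ∈ J, |a j| ≤ T) (hT : 0 ≤ T) :
    ∃ f : α → ℝ, (∀ z ∈ insert x₀ (X \ J), f z = 0) ∧ Φ f = e + ∑ j ∈ J, a j • Φ (g j) ∧
      ν f ≤ C * (1 + s * (1 + B * C)) * (1 + q (e + ∑ j ∈ J, a j • Φ (g j)) + T) := by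
  obtain ⟨f, hf, rfl, hν⟩ := h.exists_lift e he
  have hterm : ∀ j ∈ J, ν (a j • g j) ≤ T * C := fun j hj => by
    rw [map_smul_eq_mul, Real.norm_eq_abs]
    exact mul_le_mul (ha j hj) (hg j (hJ hj)).2 (apply_nonneg _ _) hT
  have hsum : ν (∑ j ∈ J, a j • g j) ≤ s * (T * C) := by
    refine (Finset.le_sum_of_subadditive ν (map_zero ν).le (map_add_le_add ν) _ _).trans
      ((Finset.sum_le_card_nsmul _ _ _ hterm).trans ?_)
    rw [nsmul_eq_mul]
    exact mul_le_mul_of_nonneg_right (by exact_mod_cast (Finset.card_le_card hJ).trans hs)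
      (by positivity)
  have htotal : Φ f + ∑ j ∈ J, a j • Φ (g j) = Φ (f + ∑ j ∈ J, a j • g j) := by
    simp only [map_add, map_sum, map_smul]
  refine ⟨f + ∑ j ∈ J, a j • g j, fun z hz => ?_, htotal.symm, ?_⟩
  · have hzX : z ∈ insert x₀ X := Finset.insert_subset_insert _ Finset.sdiff_subset hz
    have hzJ : z ∉ J := by
      rcases Finset.mem_insert.mp hz with rfl | hz
      · exact fun hzJ => h.base_notMem (hJ hzJ)
      · exact (Finset.mem_sdiff.mp hz).2
    rw [Pi.add_apply, hf z hzX, zero_add, Finset.sum_apply]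
    refine Finset.sum_eq_zero fun j hj => ?_
    rw [Pi.smul_apply, (hg j (hJ hj)).1 z hzX, if_neg (ne_of_mem_of_not_mem hj hzJ).symm, smul_zero]
  · have hq : q (Φ f) ≤ q (Φ f + ∑ j ∈ J, a j • Φ (g j)) + B * (s * (T * C)) := by
      have hle := (hΦ (∑ j ∈ J, a j • g j)).trans (mul_le_mul_of_nonneg_left hsum hB)
      simp only [map_sum, map_smul] at hle
      have := map_sub_le_add q (Φ f + ∑ j ∈ J, a j • Φ (g j)) (∑ j ∈ J, a j • Φ (g j))
      rw [add_sub_cancel_right] at this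
      linarith
    have hCq := mul_le_mul_of_nonneg_left hq hC
    have hcost : 0 ≤ C * (s * (1 + B * C)) * (1 + q (Φ f + ∑ j ∈ J, a j • Φ (g j))) := by
      positivity
    linarith [map_add_le_add ν f (∑ j ∈ J, a j • g j), mul_nonneg hC hT]

theorem exists_dual_sdiff (h : FlowSystem Φ q ν C x₀ X E) (hA : 0 ≤ A) (hB : 0 ≤ B) (hC : 0 ≤ C)
    (hqp : ∀ v, q v ≤ A * p v) (hΦ : ∀ f, q (Φ f) ≤ B * ν f) {g : α → α → ℝ}
    (hg : ∀ y ∈ X, (∀ z ∈ insert x₀ X, g y z = if z = y then 1 else 0) ∧ ν (g y) ≤ C)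
    (hJ : J ⊆ X) {s : ℕ} (hs : X.card ≤ s) {y : α} (hy : y ∈ X) (hK : 0 ≤ K)
    (hnear : NearCombination p E (fun y => Φ (g y)) J K (Φ (g y))) :
    ∃ f : α → ℝ, (∀ z ∈ insert x₀ (X \ J), f z = if z = y then 1 else 0) ∧ p (Φ f) ≤ K ∧
      ν f ≤ C + C * (1 + s * (1 + B * C)) * (1 + (B * C + A * K) + K) := by
  obtain ⟨e, he, a, ha, hp⟩ := hnear
  obtain ⟨f, hf, hΦf, hνf⟩ := h.exists_lift_add_sum hB hC hΦ hg hJ hs he ha hK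
  rw [← hΦf] at hp hνf
  have hq : q (Φ f) ≤ B * C + A * K := by
    have := map_sub_le_add q (Φ (g y)) (Φ (g y) - Φ f)
    rw [sub_sub_cancel] at this
    nlinarith [hΦ (g y), (hg y hy).2, hqp (Φ (g y) - Φ f)]
  refine ⟨g y - f, fun z hz => ?_, by rwa [map_sub], ?_⟩
  · rw [Pi.sub_apply, hf z hz, sub_zero,
      (hg y hy).1 z (Finset.insert_subset_insert _ Finset.sdiff_subset hz)]
  · refine (map_sub_le_add ν (g y) f).trans (add_le_add (hg y hy).2 (hνf.trans ?_))
    exact mul_le_mul_of_nonneg_left (by linarith) (by positivity)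

/-- Points of `X` whose totals are quantitatively independent for `p` are given up, and each of them
adds a dimension to `E`. -/
theorem exists_of_le [FiniteDimensional ℝ V] (hA : 0 ≤ A) (hB : 0 ≤ B) (hC : 0 ≤ C) (s : ℕ) :
    ∃ C', 1 ≤ C' ∧ ∀ {Φ : (α → ℝ) →ₗ[ℝ] V} {p q : Seminorm ℝ V} {ν : Seminorm ℝ (α → ℝ)} {x₀ : α}
      {X : Finset α} {E : Submodule ℝ V}, FlowSystem Φ q ν C x₀ X E → X.card ≤ s →
      (∀ v, q v ≤ A * p v) → (∀ f, q (Φ f) ≤ B * ν f) →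
      ∃ X' ⊆ X, ∃ E' : Submodule ℝ V, FlowSystem Φ p (p.comp Φ + ν) C' x₀ X' E' ∧
        (X.card + 1) * 2 ^ Module.finrank ℝ E ≤ (X'.card + 1) * 2 ^ Module.finrank ℝ E' := by
  set K : ℝ := 2 ^ s
  set L : ℝ := C * (1 + s * (1 + B * C))
  have hL : 0 ≤ L := by positivity
  have hdual : 0 ≤ K + (C + L * (1 + (B * C + A * K) + K)) := by positivity
  have hlift : 0 ≤ L * (1 + A + K) := by positivity
  refine ⟨1 + L * (1 + A + K) + (K + (C + L * (1 + (B * C + A * K) + K))), by linarith, ?_⟩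
  intro Φ p q ν x₀ X E h hs hqp hΦ
  choose! g hg using h.exists_dual
  obtain ⟨J, hJ, hbdd, hnear⟩ := exists_pivots p E (fun y => Φ (g y)) hs
  refine ⟨X \ J, Finset.sdiff_subset, E ⊔ Submodule.span ℝ ((fun y => Φ (g y)) '' J),
    ⟨fun hx => h.base_notMem (Finset.mem_sdiff.mp hx).1, fun y hy => ?_, fun v hv => ?_⟩, ?_⟩
  · have hyX := (Finset.mem_sdiff.mp hy).1
    obtain ⟨f, hf, hpf, hνf⟩ := h.exists_dual_sdiff hA hB hC hqp hΦ hg hJ hs hyX (by positivity)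
      (hnear y hyX)
    refine ⟨f, hf, ?_⟩
    rw [add_apply, Seminorm.comp_apply]
    linarith
  · obtain ⟨e, he, w, hw, rfl⟩ := Submodule.mem_sup.mp hv
    obtain ⟨a, rfl⟩ := exists_sum_smul_eq_of_mem_span_image hw
    obtain ⟨f, hf, hΦf, hνf⟩ :=
      h.exists_lift_add_sum hB hC hΦ hg hJ hs he (hbdd e he a) (by positivity)
    refine ⟨f, hf, hΦf, ?_⟩
    rw [add_apply, Seminorm.comp_apply, hΦf]
    set v := e + ∑ j ∈ J, a j • Φ (g j)
    have hpv : 0 ≤ p v := apply_nonneg p v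
    calc p v + ν f ≤ p v + L * (1 + A * p v + K * p v) := by
          gcongr
          exact hνf.trans (mul_le_mul_of_nonneg_left (by linarith [hqp v]) hL)
      _ ≤ (1 + L * (1 + A + K)) * (1 + p v) := by
          nlinarith [mul_nonneg hL (by positivity : 0 ≤ A + K + p v)]
      _ ≤ _ := mul_le_mul_of_nonneg_right (by linarith) (by linarith)
  · rw [hbdd.finrank_sup_span, Finset.card_sdiff_of_subset hJ]
    exact card_succ_mul_two_pow_le (Finset.card_le_card hJ)

end FlowSystem

end Certificates

/-- Binary trees whose leaves carry points of `α` and whose every vertex carries a label in `ε`. A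
hierarchical clustering of a finite set is encoded by labelling each cluster with its centre and
its scale. -/
inductive ScaleTree (α ε : Type*)
  | leaf (e : ε) (x : α)
  | node (e : ε) (l r : ScaleTree α ε)

namespace ScaleTree

section Flow

variable {V α ε : Type*} [AddCommGroup V] [Module ℝ V]

/-- The label of the root. -/
def label : ScaleTree α ε → ε
  | leaf e _ => e
  | node e _ _ => e

/-- The set of points at the leaves. -/
def leaves : ScaleTree α ε → Finset α
  | leaf _ x => {x}
  | node _ l r => l.leaves ∪ r.leaves

/-- The total `∑ μ x • ξ x` over the leaves of a tree, i.e. the amount that flows through its root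
if the leaf `x` emits `μ x • ξ x`. -/
def flow (ξ : α → V) (t : ScaleTree α ε) : (α → ℝ) →ₗ[ℝ] V :=
  ∑ x ∈ t.leaves, (LinearMap.proj x).smulRight (ξ x)

/-- The sum over the vertices of a tree of the size of the flow through that vertex, measured by
the seminorm attached to its label. -/
def flowNorm (p : ε → Seminorm ℝ V) (ξ : α → V) : ScaleTree α ε → Seminorm ℝ (α → ℝ)
  | leaf e x => (p e).comp ((leaf e x).flow ξ)
  | node e l r => (p e).comp ((node e l r).flow ξ) + (l.flowNorm p ξ + r.flowNorm p ξ)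

/-- The children of a vertex have disjoint sets of leaves, comparable seminorms, and the seminorm
of the left child is at most a multiple of that of the vertex. -/
def IsComparable (p : ε → Seminorm ℝ V) (A : ℝ) : ScaleTree α ε → Prop
  | leaf _ _ => True
  | node e l r => Disjoint l.leaves r.leaves ∧ (∀ v, p l.label v ≤ A * p e v) ∧
      (∀ v, p l.label v ≤ A * p r.label v) ∧ (∀ v, p r.label v ≤ A * p l.label v) ∧
      l.IsComparable p A ∧ r.IsComparable p A

variable {p : ε → Seminorm ℝ V} {ξ : α → V} {e : ε} {t l r : ScaleTree α ε} {A C : ℝ}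

theorem leaves_nonempty : ∀ t : ScaleTree α ε, t.leaves.Nonempty
  | leaf _ x => ⟨x, Finset.mem_singleton_self x⟩
  | node _ l _ => l.leaves_nonempty.mono Finset.subset_union_left

theorem leaves_left_subset : l.leaves ⊆ (node e l r).leaves :=
  Finset.subset_union_left

theorem leaves_right_subset : r.leaves ⊆ (node e l r).leaves :=
  Finset.subset_union_right

theorem card_leaves_node (h : Disjoint l.leaves r.leaves) :
    (node e l r).leaves.card = l.leaves.card + r.leaves.card :=
  Finset.card_union_of_disjoint h

@[simp]
theorem flow_apply (ξ : α → V) (t : ScaleTree α ε) (μ : α → ℝ) :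
    t.flow ξ μ = ∑ x ∈ t.leaves, μ x • ξ x := by
  simp [flow]

theorem flow_congr {μ μ' : α → ℝ} (h : ∀ x ∈ t.leaves, μ x = μ' x) : t.flow ξ μ = t.flow ξ μ' := by
  rw [flow_apply, flow_apply]
  exact Finset.sum_congr rfl fun x hx => by rw [h x hx]

theorem flow_eq_zero {μ : α → ℝ} (h : ∀ x ∈ t.leaves, μ x = 0) : t.flow ξ μ = 0 := by
  rw [flow_congr (μ' := 0) h, map_zero]

theorem flow_node (h : Disjoint l.leaves r.leaves) (μ : α → ℝ) :
    (node e l r).flow ξ μ = l.flow ξ μ + r.flow ξ μ := by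
  simp only [flow_apply, leaves, Finset.sum_union h]

theorem flowNorm_node (μ : α → ℝ) :
    (node e l r).flowNorm p ξ μ =
      p e ((node e l r).flow ξ μ) + (l.flowNorm p ξ μ + r.flowNorm p ξ μ) :=
  rfl

theorem flowNorm_congr {μ μ' : α → ℝ} :
    ∀ {t : ScaleTree α ε}, (∀ x ∈ t.leaves, μ x = μ' x) → t.flowNorm p ξ μ = t.flowNorm p ξ μ'
  | leaf e x, h => by simp only [flowNorm, Seminorm.comp_apply, flow_congr h]
  | node e l r, h => by
    rw [flowNorm_node, flowNorm_node, flow_congr h,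
      flowNorm_congr fun x hx => h x (Finset.mem_union_left _ hx),
      flowNorm_congr fun x hx => h x (Finset.mem_union_right _ hx)]

theorem flowNorm_eq_zero {μ : α → ℝ} (h : ∀ x ∈ t.leaves, μ x = 0) : t.flowNorm p ξ μ = 0 := by
  rw [flowNorm_congr (μ' := 0) h, map_zero]

theorem seminorm_flow_le_flowNorm (p : ε → Seminorm ℝ V) (ξ : α → V) (μ : α → ℝ) :
    ∀ t : ScaleTree α ε, p t.label (t.flow ξ μ) ≤ t.flowNorm p ξ μ
  | leaf _ _ => le_rfl
  | node _ l r => le_add_of_nonneg_right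
    (add_nonneg (apply_nonneg (l.flowNorm p ξ) μ) (apply_nonneg (r.flowNorm p ξ) μ))

theorem flow_piecewise_leaves (f : α → ℝ) : t.flow ξ (t.leaves.piecewise f 0) = t.flow ξ f :=
  flow_congr fun _ hx => t.leaves.piecewise_eq_of_mem f 0 hx

theorem flow_piecewise_of_disjoint {s : Finset α} (h : Disjoint s t.leaves) (f : α → ℝ) :
    t.flow ξ (s.piecewise f 0) = 0 :=
  flow_eq_zero fun _ hx => s.piecewise_eq_of_notMem f 0 (Finset.disjoint_right.mp h hx)

theorem flowNorm_piecewise_leaves (f : α → ℝ) :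
    t.flowNorm p ξ (t.leaves.piecewise f 0) = t.flowNorm p ξ f :=
  flowNorm_congr fun _ hx => t.leaves.piecewise_eq_of_mem f 0 hx

theorem flowNorm_piecewise_of_disjoint {s : Finset α} (h : Disjoint s t.leaves) (f : α → ℝ) :
    t.flowNorm p ξ (s.piecewise f 0) = 0 :=
  flowNorm_eq_zero fun _ hx => s.piecewise_eq_of_notMem f 0 (Finset.disjoint_right.mp h hx)

theorem piecewise_eq_of_union {Y Z : Finset α} (hY : Y ⊆ t.leaves) (hZ : Disjoint Z t.leaves)
    {g φ : α → ℝ} (hg : ∀ z ∈ Y, g z = φ z) (hφ : ∀ z ∈ Z, φ z = 0) :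
    ∀ z ∈ Y ∪ Z, t.leaves.piecewise g 0 z = φ z := by
  intro z hz
  rcases Finset.mem_union.mp hz with hzY | hzZ
  · rw [Finset.piecewise_eq_of_mem _ _ _ (hY hzY), hg z hzY]
  · rw [Finset.piecewise_eq_of_notMem _ _ _ (Finset.disjoint_left.mp hZ hzZ), hφ z hzZ,
      Pi.zero_apply]

/-- The two systems of the children of a vertex are put together, with the base point of the second
one added to the first; since `E₁` and `E₂` need not be independent, only one of them is kept. -/
theorem flowSystem_node {x₁ x₂ : α} {X₁ X₂ : Finset α} {E E₁ E₂ : Submodule ℝ V} {s : ℕ}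
    (hdisj : Disjoint l.leaves r.leaves)
    (h₁ : FlowSystem (l.flow ξ) (p l.label) (l.flowNorm p ξ) C x₁ X₁ E₁)
    (h₂ : FlowSystem (r.flow ξ) (p r.label) (r.flowNorm p ξ) C x₂ X₂ E₂)
    (hl : insert x₁ X₁ ⊆ l.leaves) (hr : insert x₂ X₂ ⊆ r.leaves) (hs : X₂.card ≤ s) (hC : 0 ≤ C)
    (hA : 1 ≤ A) (hone : r.flowNorm p ξ 1 ≤ 1) (hpr : ∀ v, p r.label v ≤ A * p l.label v)
    (hE : E = E₁ ∨ E = E₂) :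
    FlowSystem ((node e l r).flow ξ) (p l.label) (l.flowNorm p ξ + r.flowNorm p ξ)
      (C * A + (1 + (s + 1) * C)) x₁ (X₁ ∪ insert x₂ X₂) E := by
  have hCA : C ≤ C * A := le_mul_of_one_le_right hC hA
  have hsC : (X₂.card : ℝ) * C ≤ s * C := by gcongr
  have hcosts : 0 ≤ 1 + (s + 1) * C := by positivity
  have hYl := Finset.disjoint_of_subset_left hl hdisj
  have hYr := Finset.disjoint_of_subset_left hr hdisj.symm
  refine ⟨fun hx => ?_, fun y hy => ?_, fun v hv => ?_⟩
  · rcases Finset.mem_union.mp hx with hx | hx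
    · exact h₁.base_notMem hx
    · exact Finset.disjoint_left.mp hdisj (hl (Finset.mem_insert_self _ _)) (hr hx)
  · rw [← Finset.insert_union]
    rcases Finset.mem_union.mp hy with hy | hy
    · obtain ⟨g, hg, hν⟩ := h₁.exists_dual y hy
      have hyl := hl (Finset.mem_insert_of_mem hy)
      refine ⟨l.leaves.piecewise g 0, piecewise_eq_of_union hl hYr hg fun z hz =>
        if_neg (ne_of_mem_of_not_mem hyl (Finset.disjoint_left.mp hYr hz)).symm, ?_⟩
      rw [add_apply, flowNorm_piecewise_leaves, flowNorm_piecewise_of_disjoint hdisj]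
      linarith
    · obtain ⟨g, hg, hν⟩ := h₂.exists_dual_insert hC hone hy
      rw [Finset.union_comm]
      refine ⟨r.leaves.piecewise g 0, piecewise_eq_of_union hr hYl hg fun z hz =>
        if_neg (ne_of_mem_of_not_mem (hr hy) (Finset.disjoint_left.mp hYl hz)).symm, ?_⟩
      rw [add_apply, flowNorm_piecewise_leaves, flowNorm_piecewise_of_disjoint hdisj.symm]
      linarith
  · have hpv := apply_nonneg (p l.label) v
    have hcost := mul_nonneg hcosts (by linarith : 0 ≤ 1 + p l.label v)
    have hCv : C * (1 + p l.label v) ≤ C * A * (1 + p l.label v) := by gcongr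
    rw [← Finset.insert_union]
    rcases hE with rfl | rfl
    · obtain ⟨f, hf, hΦ, hν⟩ := h₁.exists_lift v hv
      refine ⟨l.leaves.piecewise f 0, piecewise_eq_of_union hl hYr hf fun _ _ => rfl, ?_, ?_⟩
      · rw [flow_node hdisj, flow_piecewise_leaves, flow_piecewise_of_disjoint hdisj, add_zero, hΦ]
      · rw [add_apply, flowNorm_piecewise_leaves, flowNorm_piecewise_of_disjoint hdisj]
        linarith
    · obtain ⟨f, hf, hΦ, hν⟩ := h₂.exists_lift v hv
      rw [Finset.union_comm]
      refine ⟨r.leaves.piecewise f 0, piecewise_eq_of_union hr hYl hf fun _ _ => rfl, ?_, ?_⟩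
      · rw [flow_node hdisj, flow_piecewise_leaves, flow_piecewise_of_disjoint hdisj.symm,
          zero_add, hΦ]
      · rw [add_apply, flowNorm_piecewise_leaves, flowNorm_piecewise_of_disjoint hdisj.symm]
        nlinarith [mul_le_mul_of_nonneg_left (hpr v) hC]

theorem flowSystem_leaf (x : α) :
    FlowSystem ((leaf e x).flow ξ) (p e) ((leaf e x).flowNorm p ξ) 1 x ∅ ⊥ where
  base_notMem := Finset.notMem_empty x
  exists_dual y hy := absurd hy (Finset.notMem_empty y)
  exists_lift v hv := ⟨0, fun _ _ => rfl, by
    rw [map_zero, (Submodule.mem_bot ℝ).mp hv], by simp [(Submodule.mem_bot ℝ).mp hv]⟩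

theorem seminorm_label_left_flow_node_le (hdisj : Disjoint l.leaves r.leaves) (hA : 0 ≤ A)
    (hpl : ∀ v, p l.label v ≤ A * p r.label v) (f : α → ℝ) :
    p l.label ((node e l r).flow ξ f) ≤ (1 + A) * (l.flowNorm p ξ + r.flowNorm p ξ) f := by
  have hl := seminorm_flow_le_flowNorm p ξ f l
  have hr := (hpl (r.flow ξ f)).trans
    (mul_le_mul_of_nonneg_left (seminorm_flow_le_flowNorm p ξ f r) hA)
  rw [flow_node hdisj, add_apply]
  nlinarith [map_add_le_add (p l.label) (l.flow ξ f) (r.flow ξ f),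
    mul_nonneg hA (apply_nonneg (l.flowNorm p ξ) f), apply_nonneg (r.flowNorm p ξ) f]

theorem exists_card_leaves_node_le {x₂ : α} {X₁ X₂ : Finset α} {E₁ E₂ : Submodule ℝ V}
    (hdisj : Disjoint l.leaves r.leaves) (hX₁ : X₁ ⊆ l.leaves) (hX₂ : insert x₂ X₂ ⊆ r.leaves)
    (hx₂ : x₂ ∉ X₂) (hc₁ : l.leaves.card ≤ (X₁.card + 1) * 2 ^ Module.finrank ℝ E₁)
    (hc₂ : r.leaves.card ≤ (X₂.card + 1) * 2 ^ Module.finrank ℝ E₂) :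
    ∃ E, (E = E₁ ∨ E = E₂) ∧
      (node e l r).leaves.card ≤ ((X₁ ∪ insert x₂ X₂).card + 1) * 2 ^ Module.finrank ℝ E := by
  have hcard : (X₁ ∪ insert x₂ X₂).card + 1 = (X₁.card + 1) + (X₂.card + 1) := by
    rw [Finset.card_union_of_disjoint (Finset.disjoint_of_subset_left hX₁
      (Finset.disjoint_of_subset_right hX₂ hdisj)), Finset.card_insert_of_notMem hx₂]
    ring
  rw [hcard, card_leaves_node hdisj]
  simp only [add_mul (X₁.card + 1)]
  rcases le_total (Module.finrank ℝ E₁) (Module.finrank ℝ E₂) with h | h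
  · exact ⟨E₂, Or.inr rfl, add_le_add (hc₁.trans (by gcongr; norm_num)) hc₂⟩
  · exact ⟨E₁, Or.inl rfl, add_le_add hc₁ (hc₂.trans (by gcongr; norm_num))⟩

theorem exists_flowSystem_node [FiniteDimensional ℝ V] (hA : 1 ≤ A) (hC : 0 ≤ C) (s : ℕ) :
    ∃ C', 1 ≤ C' ∧ ∀ {p : ε → Seminorm ℝ V} {ξ : α → V} {e : ε} {l r : ScaleTree α ε}
      {x₁ x₂ : α} {X₁ X₂ : Finset α} {E₁ E₂ : Submodule ℝ V},
      (node e l r).leaves.card ≤ s → (node e l r).IsComparable p A → r.flowNorm p ξ 1 ≤ 1 →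
      FlowSystem (l.flow ξ) (p l.label) (l.flowNorm p ξ) C x₁ X₁ E₁ → insert x₁ X₁ ⊆ l.leaves →
      FlowSystem (r.flow ξ) (p r.label) (r.flowNorm p ξ) C x₂ X₂ E₂ → insert x₂ X₂ ⊆ r.leaves →
      l.leaves.card ≤ (X₁.card + 1) * 2 ^ Module.finrank ℝ E₁ →
      r.leaves.card ≤ (X₂.card + 1) * 2 ^ Module.finrank ℝ E₂ →
      ∃ (X : Finset α) (E : Submodule ℝ V),
        FlowSystem ((node e l r).flow ξ) (p e) ((node e l r).flowNorm p ξ) C' x₁ X E ∧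
        insert x₁ X ⊆ (node e l r).leaves ∧
        (node e l r).leaves.card ≤ (X.card + 1) * 2 ^ Module.finrank ℝ E := by
  obtain ⟨C', hC', hmono⟩ := FlowSystem.exists_of_le (V := V) (α := α) (A := A) (B := 1 + A)
    (C := C * A + (1 + (s + 1) * C)) (by positivity) (by positivity) (by positivity) s
  refine ⟨C', hC', ?_⟩
  rintro p ξ e l r x₁ x₂ X₁ X₂ E₁ E₂ hs ⟨hdisj, hple, hpl, hpr, -⟩ hone h₁ hl h₂ hr hc₁ hc₂
  have hX₁ : X₁ ⊆ l.leaves := (Finset.subset_insert _ _).trans hl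
  have hX₂ : X₂ ⊆ r.leaves := (Finset.subset_insert _ _).trans hr
  have hX : X₁ ∪ insert x₂ X₂ ⊆ (node e l r).leaves := Finset.union_subset_union hX₁ hr
  obtain ⟨E, hE, hcard⟩ :=
    exists_card_leaves_node_le (e := e) hdisj hX₁ hr h₂.base_notMem hc₁ hc₂
  have hglue := flowSystem_node (e := e) (s := s) hdisj h₁ h₂ hl hr
    ((Finset.card_le_card (hX₂.trans Finset.subset_union_right)).trans hs) hC hA hone hpr hE
  obtain ⟨X, hXsub, E', hsys, hcount⟩ := hmono hglue ((Finset.card_le_card hX).trans hs) hple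
    (seminorm_label_left_flow_node_le hdisj (zero_le_one.trans hA) hpl)
  exact ⟨X, E', hsys, Finset.insert_subset
    (Finset.mem_union_left _ (hl (Finset.mem_insert_self _ _))) (hXsub.trans hX),
    hcard.trans hcount⟩

theorem exists_flowSystem [FiniteDimensional ℝ V] (hA : 1 ≤ A) (s : ℕ) :
    ∃ C, 1 ≤ C ∧ ∀ {p : ε → Seminorm ℝ V} {ξ : α → V} {t : ScaleTree α ε}, t.leaves.card ≤ s →
      t.IsComparable p A → t.flowNorm p ξ 1 ≤ 1 →
      ∃ (x : α) (X : Finset α) (E : Submodule ℝ V),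
        FlowSystem (t.flow ξ) (p t.label) (t.flowNorm p ξ) C x X E ∧ insert x X ⊆ t.leaves ∧
        t.leaves.card ≤ (X.card + 1) * 2 ^ Module.finrank ℝ E := by
  induction s with
  | zero => exact ⟨1, le_rfl, fun {_ _ t} hs =>
      absurd (Finset.card_pos.mpr t.leaves_nonempty) (by omega)⟩
  | succ s ih =>
    obtain ⟨C, hC, hsys⟩ := ih
    obtain ⟨C', hC', hnode⟩ :=
      exists_flowSystem_node (V := V) (α := α) (ε := ε) hA (zero_le_one.trans hC) (s + 1)
    refine ⟨C', hC', fun {p ξ t} hs ht hone => ?_⟩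
    match t with
    | leaf e x => exact ⟨x, ∅, ⊥, (flowSystem_leaf x).mono hC', by simp [leaves], by simp [leaves]⟩
    | node e l r =>
      have hcard := card_leaves_node (e := e) ht.1
      have hl := Finset.card_pos.mpr l.leaves_nonempty
      have hr := Finset.card_pos.mpr r.leaves_nonempty
      rw [flowNorm_node] at hone
      have hne := apply_nonneg (p e) ((node e l r).flow ξ 1)
      have hnl := apply_nonneg (l.flowNorm p ξ) 1
      have hnr := apply_nonneg (r.flowNorm p ξ) 1
      obtain ⟨x₁, X₁, E₁, h₁, hX₁, hc₁⟩ := hsys (by omega) ht.2.2.2.2.1 (by linarith)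
      obtain ⟨x₂, X₂, E₂, h₂, hX₂, hc₂⟩ := hsys (by omega) ht.2.2.2.2.2 (by linarith)
      obtain ⟨X, E, h, hX, hc⟩ := hnode hs ht (by linarith) h₁ hX₁ h₂ hX₂ hc₁ hc₂
      exact ⟨x₁, X, E, h, hX, hc⟩

theorem exists_affine_image_mem_Icc {ν : Seminorm ℝ (α → ℝ)} (hone : ν 1 ≤ 1) {L : Finset α}
    {g : α → ℝ} (hg : ν g ≤ C) {x y : α} (hx : x ∈ L) (hgx : g x = 0) (hy : y ∈ L) (hgy : g y = 1) :
    ∃ w : α → ℝ, (∀ x ∈ L, 0 ≤ w x ∧ w x ≤ 1) ∧ (∃ x ∈ L, w x = 0) ∧ (∃ x ∈ L, w x = 1) ∧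
      ν w ≤ C + 1 := by
  obtain ⟨a, ha, hmin⟩ := L.exists_min_image g ⟨x, hx⟩
  obtain ⟨b, hb, hmax⟩ := L.exists_max_image g ⟨x, hx⟩
  have hga : g a ≤ 0 := hgx ▸ hmin x hx
  have hgb : 1 ≤ g b := hgy ▸ hmax y hy
  have hab : 1 ≤ g b - g a := by linarith
  set c := (g b - g a)⁻¹
  have hc0 : 0 ≤ c := by positivity
  have hc1 : c ≤ 1 := inv_le_one_of_one_le₀ hab
  have hcab : c * (g b - g a) = 1 := inv_mul_cancel₀ (by linarith)
  refine ⟨c • (g - g a • 1), fun x hx => ?_, ⟨a, ha, by simp⟩, ⟨b, hb, by simpa using hcab⟩, ?_⟩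
  · simp only [Pi.smul_apply, Pi.sub_apply, Pi.one_apply, smul_eq_mul, mul_one]
    exact ⟨mul_nonneg hc0 (by linarith [hmin x hx]), by nlinarith [hmax x hx]⟩
  · have hga1 : c * |g a| ≤ 1 := by rw [abs_of_nonpos hga]; nlinarith
    calc ν (c • (g - g a • 1)) = c * ν (g - g a • 1) := by
          rw [map_smul_eq_mul, Real.norm_of_nonneg hc0]
      _ ≤ c * (ν g + |g a| * ν 1) := by
          gcongr
          exact (map_sub_le_add ν _ _).trans_eq (by rw [map_smul_eq_mul, Real.norm_eq_abs])
      _ = c * ν g + c * |g a| * ν 1 := by ring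
      _ ≤ C + 1 := add_le_add ((mul_le_of_le_one_left (apply_nonneg ν g) hc1).trans hg)
          (mul_le_one₀ hga1 (apply_nonneg ν 1) hone)

/-- The weight `w` is an affine image of a dual weight of a `FlowSystem`. -/
theorem exists_flowNorm_le_of_two_pow_lt_card [FiniteDimensional ℝ V] (hA : 1 ≤ A) (s : ℕ) :
    ∃ C, 1 ≤ C ∧ ∀ {p : ε → Seminorm ℝ V} {ξ : α → V} {t : ScaleTree α ε}, t.leaves.card ≤ s →
      t.IsComparable p A → t.flowNorm p ξ 1 ≤ 1 → 2 ^ Module.finrank ℝ V < t.leaves.card →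
      ∃ w : α → ℝ, (∀ x ∈ t.leaves, 0 ≤ w x ∧ w x ≤ 1) ∧ (∃ x ∈ t.leaves, w x = 0) ∧
        (∃ x ∈ t.leaves, w x = 1) ∧ t.flowNorm p ξ w ≤ C ∧ t.flowNorm p ξ (1 - w) ≤ C := by
  obtain ⟨C, hC, hsys⟩ := exists_flowSystem (V := V) (α := α) (ε := ε) hA s
  refine ⟨C + 2, by linarith, fun {p ξ t} hs ht hone hlt => ?_⟩
  obtain ⟨x₀, X, E, h, hX, hcard⟩ := hsys hs ht hone
  obtain ⟨y, hy⟩ : X.Nonempty := by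
    refine Finset.nonempty_iff_ne_empty.mpr fun hXe => hlt.not_ge (hcard.trans ?_)
    rw [hXe, Finset.card_empty, zero_add, one_mul]
    exact Nat.pow_le_pow_right two_pos (Submodule.finrank_le E)
  obtain ⟨g, hg, hν⟩ := h.exists_dual y hy
  have hx₀ := Finset.mem_insert_self x₀ X
  have hy₀ := Finset.mem_insert_of_mem (b := x₀) hy
  obtain ⟨w, h01, h0, h1, hw⟩ := exists_affine_image_mem_Icc hone hν (hX hx₀)
    ((hg x₀ hx₀).trans (if_neg (ne_of_mem_of_not_mem hy h.base_notMem).symm)) (hX hy₀)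
    ((hg y hy₀).trans (if_pos rfl))
  exact ⟨w, h01, h0, h1, by linarith, by linarith [map_sub_le_add (t.flowNorm p ξ) 1 w]⟩

end Flow

end ScaleTree

section Duality

variable {W α ε ι : Type*} [AddCommGroup W] [Module ℝ W] [Fintype ι]

/-- The size of a functional on `W` measured on the frame `b e`. -/
def dualSeminorm (b : ε → ι → W) (e : ε) : Seminorm ℝ (Module.Dual ℝ W) :=
  ∑ i, (normSeminorm ℝ ℝ).comp (Module.Dual.eval ℝ W (b e i))

theorem dualSeminorm_apply (b : ε → ι → W) (e : ε) (φ : Module.Dual ℝ W) :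
    dualSeminorm b e φ = ∑ i, |φ (b e i)| := by
  simp [dualSeminorm, sum_apply]

namespace ScaleTree

/-- The functions `P` on the leaves that telescope along the tree: `P x` is the sum, over the
vertices on the path from the root to the leaf `x`, of a combination of the frame attached to that
vertex, with coefficients in `B`. -/
def frameSum (b : ε → ι → W) (B : Set (ι → ℝ)) : ScaleTree α ε → Set (α → W)
  | leaf e x => {P | ∃ c ∈ B, Fintype.linearCombination ℝ (b e) c = P x}
  | node e l r => {P | ∃ c ∈ B, (fun x => P x - Fintype.linearCombination ℝ (b e) c) ∈
      l.frameSum b B ∩ r.frameSum b B}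

variable {b : ε → ι → W} {B : Set (ι → ℝ)} {P Q : α → W} {A M : ℝ}

theorem frameSum_congr :
    ∀ {t : ScaleTree α ε} {P Q : α → W}, (∀ x ∈ t.leaves, P x = Q x) → P ∈ t.frameSum b B →
      Q ∈ t.frameSum b B
  | leaf _ x, _, _, h, ⟨c, hc, hP⟩ => ⟨c, hc, hP.trans (h x (Finset.mem_singleton_self x))⟩
  | node _ _ _, _, _, h, ⟨c, hc, hl, hr⟩ =>
    ⟨c, hc, frameSum_congr (fun x hx => by rw [h x (Finset.mem_union_left _ hx)]) hl,
      frameSum_congr (fun x hx => by rw [h x (Finset.mem_union_right _ hx)]) hr⟩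

theorem frameSum_mono {B' : Set (ι → ℝ)} (hB : B ⊆ B') :
    ∀ {t : ScaleTree α ε}, t.frameSum b B ⊆ t.frameSum b B'
  | leaf _ _, _, ⟨c, hc, hP⟩ => ⟨c, hB hc, hP⟩
  | node _ _ _, _, ⟨c, hc, hl, hr⟩ => ⟨c, hB hc, frameSum_mono hB hl, frameSum_mono hB hr⟩

theorem zero_mem_frameSum (h : 0 ∈ B) : ∀ t : ScaleTree α ε, (0 : α → W) ∈ t.frameSum b B
  | leaf _ _ => ⟨0, h, map_zero _⟩
  | node _ l r => ⟨0, h, by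
    simp only [map_zero, Pi.zero_apply, sub_zero]
    exact ⟨l.zero_mem_frameSum h, r.zero_mem_frameSum h⟩⟩

theorem convex_frameSum (hB : Convex ℝ B) : ∀ t : ScaleTree α ε, Convex ℝ (t.frameSum b B)
  | leaf e x => by
    rintro P ⟨c, hc, hP⟩ Q ⟨d, hd, hQ⟩ u v hu hv huv
    exact ⟨u • c + v • d, hB hc hd hu hv huv, by
      simp only [map_add, map_smul, hP, hQ, Pi.add_apply, Pi.smul_apply]⟩
  | node e l r => by
    rintro P ⟨c, hc, hP⟩ Q ⟨d, hd, hQ⟩ u v hu hv huv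
    refine ⟨u • c + v • d, hB hc hd hu hv huv, ?_⟩
    convert ((l.convex_frameSum hB).inter (r.convex_frameSum hB)) hP hQ hu hv huv using 1
    funext x
    simp only [map_add, map_smul, Pi.add_apply, Pi.smul_apply]
    module

theorem isOpen_frameSum [TopologicalSpace W] [IsModuleTopology ℝ W] (hB : IsOpen B)
    (hb : ∀ e, Submodule.span ℝ (Set.range (b e)) = ⊤) :
    ∀ t : ScaleTree α ε, IsOpen (t.frameSum b B)
  | leaf e x => by
    have hsurj : Function.Surjective (Fintype.linearCombination ℝ (b e)) := by
      rw [← LinearMap.range_eq_top, Fintype.range_linearCombination, hb e]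
    exact IsOpen.preimage (f := fun P : α → W => P x) (continuous_apply x)
      (IsModuleTopology.isOpenMap_of_surjective hsurj B hB)
  | node e l r => by
    have := IsModuleTopology.topologicalAddGroup ℝ W
    have hunion : (node e l r).frameSum b B = ⋃ c ∈ B,
        (fun (P : α → W) x => P x - Fintype.linearCombination ℝ (b e) c) ⁻¹'
          (l.frameSum b B ∩ r.frameSum b B) := by
      ext P
      simp only [frameSum, Set.mem_ofPred_eq, Set.mem_iUnion, Set.mem_preimage, exists_prop]
    rw [hunion]
    exact isOpen_biUnion fun c _ =>
      ((isOpen_frameSum hB hb l).inter (isOpen_frameSum hB hb r)).preimage (by fun_prop)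

theorem apply_linearCombination_le (b : ε → ι → W) (φ : Module.Dual ℝ W) (e : ε) {c : ι → ℝ}
    (hc : c ∈ Metric.closedBall (0 : ι → ℝ) M) :
    φ (Fintype.linearCombination ℝ (b e) c) ≤ M * dualSeminorm b e φ := by
  rw [mem_closedBall_zero_iff] at hc
  rw [dualSeminorm_apply, Fintype.linearCombination_apply, map_sum, Finset.mul_sum]
  refine Finset.sum_le_sum fun i _ => ?_
  rw [map_smul, smul_eq_mul]
  exact (le_abs_self _).trans ((abs_mul _ _).trans_le
    (mul_le_mul_of_nonneg_right ((norm_le_pi_norm c i).trans hc) (abs_nonneg _)))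

theorem exists_apply_linearCombination_eq (b : ε → ι → W) (φ : Module.Dual ℝ W) (e : ε)
    (hM : 0 ≤ M) :
    ∃ c ∈ Metric.closedBall (0 : ι → ℝ) M,
      φ (Fintype.linearCombination ℝ (b e) c) = M * dualSeminorm b e φ := by
  refine ⟨fun i => M * SignType.sign (φ (b e i)), ?_, ?_⟩
  · rw [mem_closedBall_zero_iff, pi_norm_le_iff_of_nonneg hM]
    intro i
    rw [norm_mul, Real.norm_of_nonneg hM]
    refine mul_le_of_le_one_right hM ?_
    rcases lt_trichotomy (φ (b e i)) 0 with h | h | h <;> simp [h]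
  · rw [dualSeminorm_apply, Fintype.linearCombination_apply, map_sum, Finset.mul_sum]
    exact Finset.sum_congr rfl fun i _ => by
      rw [map_smul, smul_eq_mul, mul_assoc, sign_mul_self]

theorem flow_dual_apply (ξ : α → Module.Dual ℝ W) (t : ScaleTree α ε) (μ : α → ℝ) (v : W) :
    t.flow ξ μ v = ∑ x ∈ t.leaves, μ x * ξ x v := by
  simp only [flow_apply, LinearMap.sum_apply, LinearMap.smul_apply, smul_eq_mul]

theorem pairing_le_flowNorm {ξ : α → Module.Dual ℝ W} (μ : α → ℝ) :
    ∀ {t : ScaleTree α ε} {P : α → W}, t.IsComparable (dualSeminorm b) A →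
      P ∈ t.frameSum b (Metric.closedBall 0 M) →
      ∑ x ∈ t.leaves, μ x * ξ x (P x) ≤ M * t.flowNorm (dualSeminorm b) ξ μ
  | leaf e x, P, _, ⟨c, hc, hP⟩ => by
    have hv := apply_linearCombination_le b ((leaf e x).flow ξ μ) e hc
    rw [hP] at hv
    simpa [flow_apply, leaves, flowNorm] using hv
  | node e l r, P, ht, ⟨c, hc, hPl, hPr⟩ => by
    have hv := apply_linearCombination_le b ((node e l r).flow ξ μ) e hc
    have hl := pairing_le_flowNorm (ξ := ξ) μ ht.2.2.2.2.1 hPl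
    have hr := pairing_le_flowNorm (ξ := ξ) μ ht.2.2.2.2.2 hPr
    simp only [map_sub, mul_sub, Finset.sum_sub_distrib] at hl hr
    rw [flow_dual_apply, leaves, Finset.sum_union ht.1] at hv
    rw [leaves, Finset.sum_union ht.1, flowNorm_node]
    linarith

theorem exists_pairing_eq_flowNorm {ξ : α → Module.Dual ℝ W} (μ : α → ℝ) (hM : 0 ≤ M) :
    ∀ {t : ScaleTree α ε}, t.IsComparable (dualSeminorm b) A →
      ∃ P ∈ t.frameSum b (Metric.closedBall 0 M),
        ∑ x ∈ t.leaves, μ x * ξ x (P x) = M * t.flowNorm (dualSeminorm b) ξ μ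
  | leaf e x, _ => by
    obtain ⟨c, hc, hφ⟩ := exists_apply_linearCombination_eq b ((leaf e x).flow ξ μ) e hM
    refine ⟨fun _ => Fintype.linearCombination ℝ (b e) c, ⟨c, hc, rfl⟩, ?_⟩
    simpa [flow_apply, leaves, flowNorm] using hφ
  | node e l r, ht => by
    obtain ⟨c, hc, hφ⟩ := exists_apply_linearCombination_eq b ((node e l r).flow ξ μ) e hM
    obtain ⟨P, hP, hl⟩ := exists_pairing_eq_flowNorm (ξ := ξ) μ hM ht.2.2.2.2.1
    obtain ⟨Q, hQ, hr⟩ := exists_pairing_eq_flowNorm (ξ := ξ) μ hM ht.2.2.2.2.2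
    set v := Fintype.linearCombination ℝ (b e) c
    set R : α → W := fun x => l.leaves.piecewise P Q x + v
    have hRl : ∀ x ∈ l.leaves, R x = P x + v := fun x hx => by
      simp only [R, l.leaves.piecewise_eq_of_mem P Q hx]
    have hRr : ∀ x ∈ r.leaves, R x = Q x + v := fun x hx => by
      simp only [R, l.leaves.piecewise_eq_of_notMem P Q (Finset.disjoint_right.mp ht.1 hx)]
    refine ⟨R, ⟨c, hc,
      frameSum_congr (fun x hx => ?_) hP, frameSum_congr (fun x hx => ?_) hQ⟩, ?_⟩
    · rw [hRl x hx, add_sub_cancel_right]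
    · rw [hRr x hx, add_sub_cancel_right]
    · rw [flow_dual_apply, leaves, Finset.sum_union ht.1] at hφ
      rw [leaves, Finset.sum_union ht.1, flowNorm_node, mul_add, mul_add, ← hl, ← hr, ← hφ,
        Finset.sum_congr rfl fun x hx => by rw [hRl x hx, map_add, mul_add],
        Finset.sum_congr (s₁ := r.leaves) rfl fun x hx => by rw [hRr x hx, map_add, mul_add],
        Finset.sum_add_distrib, Finset.sum_add_distrib]
      ring

theorem sum_leaves_single_apply (f : (α → W) →ₗ[ℝ] ℝ) (s : Finset α) (P : α → W) :
    ∑ x ∈ s, f (Pi.single x (P x)) = f (s.piecewise P 0) := by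
  rw [← map_sum]
  congr 1
  funext y
  rw [Finset.sum_apply]
  by_cases hy : y ∈ s
  · rw [Finset.sum_eq_single_of_mem y hy fun x _ hxy => Pi.single_eq_of_ne hxy.symm _,
      Pi.single_eq_same, Finset.piecewise_eq_of_mem _ _ _ hy]
  · rw [Finset.piecewise_eq_of_notMem _ _ _ hy, Pi.zero_apply]
    exact Finset.sum_eq_zero fun x hx => Pi.single_eq_of_ne (ne_of_mem_of_not_mem hx hy).symm _

/-- By Hahn–Banach, a functional separates the selections of `G` from the open convex set of
telescoping functions with coefficients less than `2 * M`; `flowNorm` normalises it. -/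
theorem exists_flowNorm_le_one_of_forall_notMem (hM : 0 < M)
    (hb : ∀ e, Submodule.span ℝ (Set.range (b e)) = ⊤) {t : ScaleTree α ε}
    (ht : t.IsComparable (dualSeminorm b) A) {G : α → Set W} (hG : ∀ x ∈ t.leaves, Convex ℝ (G x))
    (hnot : ∀ P ∈ t.frameSum b (Metric.ball 0 (2 * M)), ∃ x ∈ t.leaves, P x ∉ G x) :
    ∃ ξ : α → Module.Dual ℝ W, t.flowNorm (dualSeminorm b) ξ 1 ≤ 1 ∧
      ∀ P : α → W, (∀ x ∈ t.leaves, P x ∈ G x) → M ≤ ∑ x ∈ t.leaves, ξ x (P x) := by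
  let _ : TopologicalSpace W := moduleTopology ℝ W
  have : IsModuleTopology ℝ W := ⟨rfl⟩
  have := IsModuleTopology.topologicalAddGroup ℝ W
  have := IsModuleTopology.toContinuousSMul ℝ W
  have hconv : Convex ℝ {P : α → W | ∀ x ∈ t.leaves, P x ∈ G x} :=
    fun P hP Q hQ u v hu hv huv x hx => hG x hx (hP x hx) (hQ x hx) hu hv huv
  obtain ⟨f, u, hlt, hle⟩ := geometric_hahn_banach_open (t.convex_frameSum (convex_ball 0 (2 * M)))
    (isOpen_frameSum Metric.isOpen_ball hb t) hconv (Set.disjoint_left.mpr fun P hP hPG => by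
      obtain ⟨x, hx, hxG⟩ := hnot P hP
      exact hxG (hPG x hx))
  have hu : 0 < u := by simpa using hlt 0 (t.zero_mem_frameSum (Metric.mem_ball_self (by linarith)))
  set ξ : α → Module.Dual ℝ W := fun x =>
    (M / u) • (f.toLinearMap ∘ₗ LinearMap.single ℝ (fun _ => W) x)
  have hξ : ∀ P : α → W, ∑ x ∈ t.leaves, ξ x (P x) = M / u * f (t.leaves.piecewise P 0) := by
    intro P
    have := sum_leaves_single_apply f.toLinearMap t.leaves P
    rw [ContinuousLinearMap.coe_coe] at this
    rw [← this, Finset.mul_sum]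
    rfl
  have hpw : ∀ P : α → W, ∀ x ∈ t.leaves, P x = t.leaves.piecewise P 0 x := fun P x hx =>
    (t.leaves.piecewise_eq_of_mem P 0 hx).symm
  have hMu : M / u * u = M := div_mul_cancel₀ M hu.ne'
  refine ⟨ξ, ?_, fun P hP => ?_⟩
  · obtain ⟨P, hP, hsum⟩ := exists_pairing_eq_flowNorm (ξ := ξ) 1 hM.le ht
    have hball := frameSum_mono (Metric.closedBall_subset_ball (by linarith : M < 2 * M)) hP
    simp only [Pi.one_apply, one_mul] at hsum
    refine le_of_mul_le_mul_left ?_ hM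
    rw [mul_one, ← hsum, hξ]
    exact (mul_le_mul_of_nonneg_left (hlt _ (frameSum_congr (hpw P) hball)).le
      (by positivity)).trans_eq hMu
  · rw [hξ]
    exact hMu.symm.trans_le (mul_le_mul_of_nonneg_left
      (hle _ fun x hx => hpw P x hx ▸ hP x hx) (by positivity))

/-- Were there no selection, the normalised separating functional could be split by
`exists_flowNorm_le_of_two_pow_lt_card`, and would then be too small on the corresponding convex
combination of two selections that fail at one leaf each. -/
theorem exists_mem_frameSum_of_forall_ne [FiniteDimensional ℝ W] (hA : 1 ≤ A) (s : ℕ) :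
    ∃ C, 1 ≤ C ∧ ∀ {b : ε → ι → W}, (∀ e, Submodule.span ℝ (Set.range (b e)) = ⊤) →
      ∀ {t : ScaleTree α ε}, t.leaves.card ≤ s → 2 ^ Module.finrank ℝ W < t.leaves.card →
      t.IsComparable (dualSeminorm b) A → ∀ {G : α → Set W}, (∀ x ∈ t.leaves, Convex ℝ (G x)) →
      ∀ {M : ℝ}, 0 < M → (∀ x ∈ t.leaves, ∃ P ∈ t.frameSum b (Metric.closedBall 0 M),
        ∀ y ∈ t.leaves, y ≠ x → P y ∈ G y) →
      ∃ P ∈ t.frameSum b (Metric.closedBall 0 (C * M)), ∀ x ∈ t.leaves, P x ∈ G x := by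
  obtain ⟨C, hC, hsplit⟩ := exists_flowNorm_le_of_two_pow_lt_card (V := Module.Dual ℝ W) (α := α)
    (ε := ε) hA s
  refine ⟨6 * C, by linarith, fun {b} hb {t} hs hlt ht {G} hG {M} hM hne => ?_⟩
  by_contra! hnot
  obtain ⟨ξ, hone, hsel⟩ := exists_flowNorm_le_one_of_forall_notMem (M := 3 * C * M)
    (by positivity) hb ht hG fun P hP => hnot P (frameSum_mono
      (Metric.ball_subset_closedBall.trans (Metric.closedBall_subset_closedBall (by linarith))) hP)
  obtain ⟨w, hw, ⟨x, hx, hwx⟩, ⟨y, hy, hwy⟩, hνw, hνw'⟩ :=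
    hsplit hs ht hone (by rwa [Subspace.dual_finrank_eq])
  obtain ⟨P, hP, hPG⟩ := hne x hx
  obtain ⟨Q, hQ, hQG⟩ := hne y hy
  have hmem : ∀ z ∈ t.leaves, w z • P z + (1 - w z) • Q z ∈ G z := by
    intro z hz
    rcases eq_or_ne z x with rfl | hzx
    · simpa [hwx] using hQG z hz fun h => by simp [h, hwy] at hwx
    rcases eq_or_ne z y with rfl | hzy
    · simpa [hwy] using hPG z hz hzx
    exact hG z hz (hPG z hz hzx) (hQG z hz hzy) (hw z hz).1
      (by linarith [(hw z hz).2]) (by ring)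
  have hsum := hsel _ hmem
  have hPw := pairing_le_flowNorm (ξ := ξ) w ht hP
  have hQw := pairing_le_flowNorm (ξ := ξ) (1 - w) ht hQ
  simp only [map_add, map_smul, smul_eq_mul, Finset.sum_add_distrib] at hsum
  simp only [Pi.sub_apply, Pi.one_apply] at hQw
  nlinarith

end ScaleTree

end Duality

section Clusters

theorem exists_separated_partition {X : Type*} [PseudoMetricSpace X] {S : Finset X} {N : ℕ}
    (hS : S.card ≤ N) {a c : X} (ha : a ∈ S) (hc : c ∈ S) (hac : 0 < dist a c) :
    ∃ S₁ S₂ : Finset X, a ∈ S₁ ∧ c ∈ S₂ ∧ Disjoint S₁ S₂ ∧ S₁ ∪ S₂ = S ∧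
      ∀ x ∈ S₁, ∀ y ∈ S₂, dist a c / N ≤ dist x y := by
  have hN : (0 : ℝ) < N := by exact_mod_cast (Finset.card_pos.mpr ⟨a, ha⟩).trans_le hS
  let φ : X → ℕ := fun x => ⌊N * dist a x / dist a c⌋₊
  have hφa : φ a = 0 := by simp [φ]
  have hφc : φ c = N := by simp [φ, mul_div_assoc, div_self hac.ne']
  obtain ⟨j, hjN, hj⟩ : ∃ j ∈ Finset.range (N + 1), j ∉ S.image φ :=
    Finset.exists_mem_notMem_of_card_lt_card <| by
      rw [Finset.card_range]
      exact Nat.lt_succ_of_le (Finset.card_image_le.trans hS)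
  have hφj : ∀ x ∈ S, φ x ≠ j := fun x hx h => hj (h ▸ Finset.mem_image_of_mem φ hx)
  have hj0 : 0 < j := Nat.pos_of_ne_zero fun h => hφj a ha (hφa.trans h.symm)
  refine ⟨S.filter (φ · < j), S.filter (¬ φ · < j), Finset.mem_filter.mpr ⟨ha, hφa ▸ hj0⟩,
    Finset.mem_filter.mpr ⟨hc, hφc ▸ (Finset.mem_range_succ_iff.mp hjN).not_gt⟩,
    Finset.disjoint_filter_filter_not _ _ _, Finset.filter_union_filter_not_eq _ _,
    fun x hx y hy => ?_⟩
  rw [Finset.mem_filter] at hx hy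
  have hx' : N * dist a x / dist a c < j := Nat.lt_of_floor_lt hx.2
  have hy' : ((j + 1 : ℕ) : ℝ) ≤ N * dist a y / dist a c :=
    (Nat.le_floor_iff (by positivity)).mp ((not_lt.mp hy.2).lt_of_ne' (hφj y hy.1))
  rw [div_lt_iff₀ hac] at hx'
  rw [le_div_iff₀ hac] at hy'
  push_cast at hy'
  rw [div_le_iff₀ hN]
  nlinarith [dist_triangle a x y]

namespace ScaleTree

variable {X : Type*}

/-- A tree of clusters at scales in `(0, 1]`, each vertex being labelled by a point of its cluster
and a scale. The two children of a vertex have the same scale, which bounds the diameter of the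
vertex and, up to the factor `κ`, the distance between the children from below. -/
def IsClusterTree [Dist X] (κ : ℝ) : ScaleTree X (X × Set.Ioc (0 : ℝ) 1) → Prop
  | leaf e x => e.1 = x
  | node e l r => e.1 ∈ l.leaves ∪ r.leaves ∧ Disjoint l.leaves r.leaves ∧
      r.label.2 = l.label.2 ∧ l.label.2 ≤ e.2 ∧
      (∀ x ∈ l.leaves ∪ r.leaves, ∀ y ∈ l.leaves ∪ r.leaves, dist x y ≤ l.label.2) ∧
      (∀ x ∈ l.leaves, ∀ y ∈ r.leaves, κ * l.label.2 ≤ dist x y) ∧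
      l.IsClusterTree κ ∧ r.IsClusterTree κ

theorem IsClusterTree.label_fst_mem_leaves [Dist X] {κ : ℝ} :
    ∀ {t : ScaleTree X (X × Set.Ioc (0 : ℝ) 1)}, t.IsClusterTree κ → t.label.1 ∈ t.leaves
  | leaf _ _, h => Finset.mem_singleton.mpr h
  | node _ _ _, h => h.1

theorem exists_isClusterTree [MetricSpace X] {N : ℕ} (S : Finset X) (hS : S.card ≤ N) {c : X}
    (hc : c ∈ S) (δ : Set.Ioc (0 : ℝ) 1) (hδ : ∀ x ∈ S, ∀ y ∈ S, dist x y ≤ δ) :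
    ∃ t : ScaleTree X (X × Set.Ioc (0 : ℝ) 1),
      t.leaves = S ∧ t.label = (c, δ) ∧ t.IsClusterTree (N : ℝ)⁻¹ := by
  induction S using Finset.strongInduction generalizing c δ with
  | H S ih =>
  obtain ⟨⟨a, b⟩, hab, hmax⟩ :=
    (S ×ˢ S).exists_max_image (fun q => dist q.1 q.2) ⟨(c, c), Finset.mem_product.mpr ⟨hc, hc⟩⟩
  obtain ⟨ha, hb⟩ := Finset.mem_product.mp hab
  have hdiam : ∀ x ∈ S, ∀ y ∈ S, dist x y ≤ dist a b := fun x hx y hy =>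
    hmax (x, y) (Finset.mem_product.mpr ⟨hx, hy⟩)
  rcases eq_or_ne a b with rfl | hne
  · have hSc : S = {c} := Finset.eq_singleton_iff_unique_mem.mpr ⟨hc, fun x hx =>
      dist_le_zero.mp ((hdiam x hx c hc).trans_eq (dist_self a))⟩
    exact ⟨leaf (c, δ) c, hSc.symm, rfl, rfl⟩
  obtain ⟨S₁, S₂, ha₁, hb₂, hdisj, hunion, hsep⟩ :=
    exists_separated_partition hS ha hb (dist_pos.mpr hne)
  have h₁ : S₁ ⊂ S := Finset.ssubset_iff_subset_ne.mpr ⟨hunion ▸ Finset.subset_union_left,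
    fun h => Finset.disjoint_right.mp hdisj hb₂ (h ▸ hb)⟩
  have h₂ : S₂ ⊂ S := Finset.ssubset_iff_subset_ne.mpr ⟨hunion ▸ Finset.subset_union_right,
    fun h => Finset.disjoint_left.mp hdisj ha₁ (h ▸ ha)⟩
  let ρ : Set.Ioc (0 : ℝ) 1 := ⟨dist a b, dist_pos.mpr hne, (hδ a ha b hb).trans δ.2.2⟩
  have hρ : ∀ {T : Finset X}, T ⊂ S → ∀ x ∈ T, ∀ y ∈ T, dist x y ≤ ρ := fun hT x hx y hy =>
    hdiam x (hT.1 hx) y (hT.1 hy)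
  obtain ⟨l, hl, hle, hlt⟩ := ih S₁ h₁ ((Finset.card_le_card h₁.1).trans hS) ha₁ ρ (hρ h₁)
  obtain ⟨r, hr, hre, hrt⟩ := ih S₂ h₂ ((Finset.card_le_card h₂.1).trans hS) hb₂ ρ (hρ h₂)
  refine ⟨node (c, δ) l r, by rw [leaves, hl, hr, hunion], rfl, ?_⟩
  simp only [IsClusterTree, hl, hr, hle, hre, hunion]
  refine ⟨hc, hdisj, trivial, hδ a ha b hb, hdiam, fun x hx y hy => ?_, hlt, hrt⟩
  rw [inv_mul_eq_div]
  exact hsep x hx y hy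

theorem IsClusterTree.isComparable [Dist X] {κ : ℝ} {V : Type*} [AddCommGroup V] [Module ℝ V]
    {p : X × Set.Ioc (0 : ℝ) 1 → Seminorm ℝ V} {A : ℝ}
    (hp : ∀ x y : X, ∀ δ δ' : Set.Ioc (0 : ℝ) 1, δ ≤ δ' → dist x y ≤ δ' →
      ∀ v, p (x, δ) v ≤ A * p (y, δ') v) :
    ∀ {t : ScaleTree X (X × Set.Ioc (0 : ℝ) 1)}, t.IsClusterTree κ → t.IsComparable p A
  | leaf _ _, _ => trivial
  | node e l r, ⟨he, hdisj, hscale, hle, hdiam, _, hl, hr⟩ => by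
    have hlu := Finset.mem_union_left r.leaves hl.label_fst_mem_leaves
    have hru := Finset.mem_union_right l.leaves hr.label_fst_mem_leaves
    exact ⟨hdisj, hp _ _ _ _ hle ((hdiam _ hlu _ he).trans hle),
      hp _ _ _ _ hscale.ge ((hdiam _ hlu _ hru).trans_eq (congrArg Subtype.val hscale.symm)),
      hp _ _ _ _ hscale.le (hdiam _ hru _ hlu), hl.isComparable hp, hr.isComparable hp⟩

theorem mem_frameSum_of_isClusterTree [Dist X] {κ : ℝ} {W ι : Type*} [AddCommGroup W] [Module ℝ W]
    [Fintype ι] {b : X × Set.Ioc (0 : ℝ) 1 → ι → W} {B : Set (ι → ℝ)} {P : X → W}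
    (hP : ∀ (x z : X) (ρ : Set.Ioc (0 : ℝ) 1), dist x z ≤ ρ →
      ∃ c ∈ B, Fintype.linearCombination ℝ (b (x, ρ)) c = P x - P z) :
    ∀ {t : ScaleTree X (X × Set.Ioc (0 : ℝ) 1)} {w : W}, t.IsClusterTree κ →
      (∃ c ∈ B, Fintype.linearCombination ℝ (b t.label) c = P t.label.1 - w) →
      (fun x => P x - w) ∈ t.frameSum b B
  | leaf e x, w, ht, hw => by
    obtain rfl : e.1 = x := ht
    exact hw
  | node e l r, w, ⟨he, _, hscale, _, hdiam, _, hl, hr⟩, ⟨c, hc, hcw⟩ => by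
    have hsub : (fun x => P x - w - Fintype.linearCombination ℝ (b e) c) =
        fun x => P x - P e.1 := by
      funext x
      rw [show Fintype.linearCombination ℝ (b e) c = P e.1 - w from hcw]
      abel
    refine ⟨c, hc, ?_⟩
    rw [hsub]
    exact ⟨mem_frameSum_of_isClusterTree hP hl <| hP _ _ _ <|
        hdiam _ (Finset.mem_union_left _ hl.label_fst_mem_leaves) _ he,
      mem_frameSum_of_isClusterTree hP hr <| hP _ _ _ <| (hdiam _
        (Finset.mem_union_right _ hr.label_fst_mem_leaves) _ he).trans_eq
          (congrArg Subtype.val hscale.symm)⟩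

end ScaleTree

end Clusters

section PartialDerivatives

variable {n : ℕ} {f : En n → ℝ}

theorem contDiff_foldr_pd1 {k : ℕ} :
    ∀ L : List (Fin n), ContDiff ℝ (k + L.length : ℕ) f → ContDiff ℝ k (L.foldr pd1 f)
  | [], hf => hf
  | _ :: L, hf =>
    ((contDiff_foldr_pd1 (k := k + 1) L
      (hf.of_le (by simp [add_right_comm, add_assoc]))).fderiv_right
        (m := k) (by norm_cast)).clm_apply contDiff_const

theorem foldr_pd1_apply (x : En n) :
    ∀ L : List (Fin n), ContDiff ℝ L.length f →
      L.foldr pd1 f x = iteratedFDeriv ℝ L.length f x fun k => EuclideanSpace.single (L.get k) 1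
  | [], _ => (iteratedFDeriv_zero_apply _).symm
  | i :: L, hf => by
    have hL : L.foldr pd1 f = fun y =>
        iteratedFDeriv ℝ L.length f y fun k => EuclideanSpace.single (L.get k) 1 :=
      funext fun y => foldr_pd1_apply y L (hf.of_le (by simp))
    have hd : DifferentiableAt ℝ (iteratedFDeriv ℝ L.length f) x :=
      hf.differentiable_iteratedFDeriv (by exact_mod_cast Nat.lt_succ_self _) x
    rw [List.foldr_cons, hL, pd1]
    rw [fderiv_continuousMultilinear_apply_const hd]
    exact (iteratedFDeriv_succ_apply_left (𝕜 := ℝ) (f := f) (x := x) (n := L.length)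
      fun k => EuclideanSpace.single ((i :: L).get k) (1 : ℝ)).symm

theorem pd1_comm (hf : ContDiff ℝ 2 f) (i j : Fin n) : pd1 i (pd1 j f) = pd1 j (pd1 i f) := by
  have hd : Differentiable ℝ (fderiv ℝ f) :=
    (hf.fderiv_right (m := 1) (by norm_num)).differentiable (by norm_num)
  have hpd : ∀ (i j : Fin n) (x : En n), pd1 i (pd1 j f) x =
      fderiv ℝ (fderiv ℝ f) x (EuclideanSpace.single i 1) (EuclideanSpace.single j 1) := by
    intro i j x
    unfold pd1
    rw [fderiv_clm_apply (hd x) (differentiableAt_const _)]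
    simp
  funext x
  rw [hpd, hpd]
  exact hf.contDiffAt.isSymmSndFDerivAt (by simp) _ _

theorem foldr_pd1_perm {L L' : List (Fin n)} (h : L.Perm L') (hf : ContDiff ℝ L.length f) :
    L.foldr pd1 f = L'.foldr pd1 f := by
  induction h with
  | nil => rfl
  | cons i _ ih => rw [List.foldr_cons, List.foldr_cons, ih (hf.of_le (by simp))]
  | swap i j L =>
    exact pd1_comm (contDiff_foldr_pd1 (k := 2) L (hf.of_le (by norm_cast; simp [add_comm 2]))) _ _
  | trans h _ ih ih' => rw [ih hf, ih' (h.length_eq ▸ hf)]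

/-- The directions of the partial derivatives that make up `pdalpha α`, in order. -/
def directions (α : Fin n → ℕ) : List (Fin n) :=
  (List.finRange n).flatMap fun i => List.replicate (α i) i

theorem pdalpha_eq_foldr (α : Fin n → ℕ) (f : En n → ℝ) :
    pdalpha α f = (directions α).foldr pd1 f := by
  have hrep : ∀ (i : Fin n) (k : ℕ) (g : En n → ℝ),
      (pd1 i)^[k] g = (List.replicate k i).foldr pd1 g := by
    intro i k g
    induction k with
    | zero => rfl
    | succ k ih => rw [Function.iterate_succ_apply', ih, List.replicate_succ, List.foldr_cons]
  unfold pdalpha directions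
  generalize List.finRange n = l
  induction l with
  | nil => rfl
  | cons a l ih => rw [List.foldr_cons, ih, List.flatMap_cons, List.foldr_append, hrep]

theorem count_directions (α : Fin n → ℕ) (i : Fin n) : (directions α).count i = α i := by
  have hrep : (List.count i ∘ fun j => List.replicate (α j) j) =
      fun j => if j = i then α j else 0 := by
    funext j
    simp [List.count_replicate]
  rw [directions, List.count_flatMap, hrep, ← Fin.sum_univ_def]
  simp

theorem length_directions (α : Fin n → ℕ) : (directions α).length = ∑ i, α i := by
  simp [directions, List.length_flatMap, Fin.sum_univ_def]

theorem exists_pdalpha_eq_iteratedFDeriv (α : Fin n → ℕ) :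
    ∃ v : Fin (∑ i, α i) → En n, (∀ k, ‖v k‖ = 1) ∧ ∀ {f : En n → ℝ},
      ContDiff ℝ (∑ i, α i : ℕ) f → ∀ x, pdalpha α f x = iteratedFDeriv ℝ (∑ i, α i) f x v := by
  rw [← length_directions]
  refine ⟨fun k => EuclideanSpace.single ((directions α).get k) 1, fun k => by simp, ?_⟩
  intro f hf x
  rw [pdalpha_eq_foldr]
  exact foldr_pd1_apply x _ hf

theorem abs_pdalpha_le_norm_iteratedFDeriv (α : Fin n → ℕ) (hf : ContDiff ℝ (∑ i, α i : ℕ) f)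
    (x : En n) : |pdalpha α f x| ≤ ‖iteratedFDeriv ℝ (∑ i, α i) f x‖ := by
  obtain ⟨v, hv, hα⟩ := exists_pdalpha_eq_iteratedFDeriv α
  rw [hα hf]
  simpa [hv] using (iteratedFDeriv ℝ (∑ i, α i) f x).le_opNorm v

theorem pdalpha_eq_of_eventuallyEq {g : En n → ℝ} (α : Fin n → ℕ)
    (hf : ContDiff ℝ (∑ i, α i : ℕ) f) (hg : ContDiff ℝ (∑ i, α i : ℕ) g) {x : En n}
    (h : f =ᶠ[nhds x] g) : pdalpha α f x = pdalpha α g x := by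
  obtain ⟨v, -, hα⟩ := exists_pdalpha_eq_iteratedFDeriv α
  rw [hα hf, hα hg, (h.iteratedFDeriv ℝ _).eq_of_nhds]

theorem perm_directions_count (L : List (Fin n)) : L.Perm (directions fun i => L.count i) :=
  List.perm_iff_count.mpr fun i => (count_directions (fun i => L.count i) i).symm

theorem exists_iteratedFDeriv_single_eq_pdalpha {k : ℕ} (hf : ContDiff ℝ k f) (w : Fin k → Fin n)
    (x : En n) : ∃ α : Fin n → ℕ, ∑ i, α i = k ∧
      iteratedFDeriv ℝ k f x (fun j => EuclideanSpace.single (w j) 1) = pdalpha α f x := by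
  obtain ⟨L, rfl, rfl⟩ :
      ∃ (L : List (Fin n)) (h : L.length = k), w = fun j => L.get (j.cast h.symm) :=
    ⟨List.ofFn w, List.length_ofFn, by ext; simp⟩
  refine ⟨fun i => L.count i, ?_, ?_⟩
  · rw [← length_directions, ← (perm_directions_count L).length_eq]
  · rw [pdalpha_eq_foldr, ← foldr_pd1_perm (perm_directions_count L) hf]
    exact (foldr_pd1_apply x L hf).symm

theorem norm_le_of_forall_single {k : ℕ} {g : ContinuousMultilinearMap ℝ (fun _ : Fin k => En n) ℝ}
    {M : ℝ} (hM : 0 ≤ M)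
    (hg : ∀ w : Fin k → Fin n, |g fun j => EuclideanSpace.single (w j) 1| ≤ M) :
    ‖g‖ ≤ n ^ k * M := by
  refine g.opNorm_le_bound (by positivity) fun v => ?_
  have hv : v = fun j => ∑ i, v j i • EuclideanSpace.single i (1 : ℝ) := by
    funext j
    ext i
    simp [Pi.single_apply]
  have hexp : g v =
      ∑ w : Fin k → Fin n, (∏ j, v j (w j)) * g fun j => EuclideanSpace.single (w j) 1 := by
    conv_lhs => rw [hv]
    rw [g.map_sum]
    exact Finset.sum_congr rfl fun w _ => by rw [g.map_smul_univ, smul_eq_mul]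
  rw [hexp]
  calc ‖∑ w : Fin k → Fin n, (∏ j, v j (w j)) * g fun j => EuclideanSpace.single (w j) 1‖
      ≤ ∑ _w : Fin k → Fin n, (∏ j, ‖v j‖) * M := by
        refine (norm_sum_le _ _).trans (Finset.sum_le_sum fun w _ => ?_)
        rw [norm_mul, norm_prod]
        gcongr
        · exact PiLp.norm_apply_le _ _
        · exact hg w
    _ = n ^ k * M * ∏ j, ‖v j‖ := by
        simp only [Finset.sum_const, Finset.card_univ, Fintype.card_pi, Fintype.card_fin,
          Finset.prod_const, nsmul_eq_mul, Nat.cast_pow]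
        ring

theorem norm_iteratedFDeriv_le_of_forall_abs_pdalpha_le {k : ℕ} (hf : ContDiff ℝ k f) {M : ℝ}
    (hM : 0 ≤ M) {x : En n} (h : ∀ α : Fin n → ℕ, ∑ i, α i = k → |pdalpha α f x| ≤ M) :
    ‖iteratedFDeriv ℝ k f x‖ ≤ n ^ k * M :=
  norm_le_of_forall_single hM fun w => by
    obtain ⟨α, hα, hw⟩ := exists_iteratedFDeriv_single_eq_pdalpha hf w x
    rw [hw]
    exact h α hα

end PartialDerivatives

theorem norm_iteratedFDeriv_le_of_eq_zero {E F : Type*} [NormedAddCommGroup E] [NormedSpace ℝ E]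
    [NormedAddCommGroup F] [NormedSpace ℝ F] {m : ℕ} {f : E → F} (hf : ContDiff ℝ m f) {x : E}
    (h₀ : ∀ k < m, iteratedFDeriv ℝ k f x = 0) {M : ℝ} (hM : ∀ y, ‖iteratedFDeriv ℝ m f y‖ ≤ M)
    {k : ℕ} (hk : k ≤ m) : ∀ y, ‖iteratedFDeriv ℝ k f y‖ ≤ M * ‖y - x‖ ^ (m - k) := by
  induction hk using Nat.decreasingInduction with
  | self => simpa using hM
  | of_succ k hk ih =>
    intro y
    have hbound : ∀ z ∈ Metric.closedBall x ‖y - x‖,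
        ‖fderiv ℝ (iteratedFDeriv ℝ k f) z‖ ≤ M * ‖y - x‖ ^ (m - (k + 1)) := by
      intro z hz
      have hM₀ : 0 ≤ M := (norm_nonneg _).trans (hM x)
      rw [norm_fderiv_iteratedFDeriv]
      refine (ih z).trans ?_
      gcongr
      rwa [← dist_eq_norm]
    have hmean := (convex_closedBall x ‖y - x‖).norm_image_sub_le_of_norm_fderiv_le (𝕜 := ℝ)
      (fun z _ => hf.differentiable_iteratedFDeriv (by exact_mod_cast hk) z) hbound
      (Metric.mem_closedBall_self (norm_nonneg _)) (mem_closedBall_iff_norm.mpr le_rfl : y ∈ _)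
    rwa [h₀ k hk, sub_zero, mul_assoc, ← pow_succ, Nat.sub_add_eq, Nat.sub_add_cancel
      (Nat.sub_pos_of_lt hk)] at hmean

section Polynomials

open MvPolynomial

theorem add_pow_eq_sum_fin {R : Type*} [CommSemiring R] (a b : R) {k m : ℕ} (hk : k < m) :
    (a + b) ^ k = ∑ j : Fin m, a ^ (j : ℕ) * b ^ (k - j) * (k.choose j : R) := by
  rw [add_pow, Fin.sum_univ_eq_sum_range fun j => a ^ j * b ^ (k - j) * (k.choose j : R)]
  refine Finset.sum_subset (Finset.range_subset_range.mpr hk) fun j _ hj => ?_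
  rw [Nat.choose_eq_zero_of_lt (not_le.mp fun h => hj (Finset.mem_range_succ_iff.mpr h)),
    Nat.cast_zero, mul_zero]

variable {m n : ℕ}

/-- The multi-indices of order at most `m - 1` in `n` variables, encoded as in `jetScalar`. -/
abbrev JetIndex (m n : ℕ) : Type := {α : Fin n → Fin m // ∑ i, (α i : ℕ) ≤ m - 1}

namespace JetIndex

/-- The multi-index as a function to the natural numbers. -/
def exponent (a : JetIndex m n) (i : Fin n) : ℕ := a.1 i

/-- The order `|a|` of a multi-index. -/
def order (a : JetIndex m n) : ℕ := ∑ i, a.exponent i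

theorem exponent_injective : Function.Injective (exponent : JetIndex m n → Fin n → ℕ) :=
  fun _ _ h => Subtype.ext <| funext fun i => Fin.ext (congrFun h i)

theorem exponent_lt (a : JetIndex m n) (i : Fin n) : a.exponent i < m := (a.1 i).2

theorem order_le (a : JetIndex m n) : a.order ≤ m - 1 := a.2

theorem exists_exponent_eq {α : Fin n → ℕ} (h : ∑ i, α i < m) :
    ∃ a : JetIndex m n, a.exponent = α :=
  ⟨⟨fun i =>
      ⟨α i, (Finset.single_le_sum (fun _ _ => Nat.zero_le _) (Finset.mem_univ i)).trans_lt h⟩,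
    Nat.le_sub_one_of_lt h⟩, rfl⟩

/-- Adding the slack `m - 1 - |a|` as a zeroth entry turns the multi-indices of order at most
`m - 1` into multi-indices of order exactly `m - 1`. -/
theorem card_le_choose (hm : 1 ≤ m) : Fintype.card (JetIndex m n) ≤ (n + m - 1).choose n := by
  let g : JetIndex m n → (Fin (n + 1) →₀ ℕ) := fun a =>
    Finsupp.equivFunOnFinite.symm (Fin.cons (m - 1 - a.order) a.exponent)
  have hg : Function.Injective g := fun a b h => exponent_injective
    (Fin.cons_injective2 (Finsupp.equivFunOnFinite.symm.injective h)).2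
  have hsub : Finset.univ.image g ⊆ Finset.univ.finsuppAntidiag (m - 1) := by
    refine Finset.image_subset_iff.mpr fun a _ => Finset.mem_finsuppAntidiag.mpr ⟨?_, by simp⟩
    rw [Fin.sum_univ_succ]
    exact Nat.sub_add_cancel a.order_le
  calc Fintype.card (JetIndex m n) = (Finset.univ.image g).card := by
        rw [Finset.card_image_of_injective _ hg, Finset.card_univ]
    _ ≤ (n + 1 + (m - 1) - 1).choose (m - 1) := by
        simpa [Finset.card_finsuppAntidiag_nat_eq_choose] using Finset.card_le_card hsub
    _ = (n + m - 1).choose n := by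
        rw [show n + 1 + (m - 1) - 1 = n + (m - 1) by omega, ← Nat.choose_symm_add,
          Nat.add_sub_assoc hm]

/-- The factorial `a!` of a multi-index. -/
def factorial (a : JetIndex m n) : ℝ := (∏ i, (a.exponent i).factorial : ℕ)

theorem one_le_factorial (a : JetIndex m n) : 1 ≤ a.factorial := by
  unfold factorial
  exact_mod_cast Finset.prod_pos fun i _ => Nat.factorial_pos _

end JetIndex

/-- The monomial `(X - y)^a`. -/
def shiftedMonomial (y : En n) (a : Fin n → ℕ) : MvPolynomial (Fin n) ℝ :=
  ∏ i, (X i - C (y i)) ^ a i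

/-- The coefficient of `(X - x)^b` in the expansion of `(X - y)^a`. -/
def translationCoeff (y x : En n) (a b : Fin n → ℕ) : ℝ :=
  ∏ i, (x i - y i) ^ (a i - b i) * (a i).choose (b i)

theorem translationCoeff_eq_zero (y x : En n) {a b : Fin n → ℕ} {i : Fin n} (h : a i < b i) :
    translationCoeff y x a b = 0 :=
  Finset.prod_eq_zero (Finset.mem_univ i)
    (by rw [Nat.choose_eq_zero_of_lt h, Nat.cast_zero, mul_zero])

theorem shiftedMonomial_eq_sum (y x : En n) (a : JetIndex m n) :
    shiftedMonomial y a.exponent =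
      ∑ b : JetIndex m n,
        translationCoeff y x a.exponent b.exponent • shiftedMonomial x b.exponent := by
  have hfactor : ∀ i, (X i - C (y i) : MvPolynomial (Fin n) ℝ) ^ a.exponent i = ∑ j : Fin m,
      C ((x i - y i) ^ (a.exponent i - j) * (a.exponent i).choose j) *
        (X i - C (x i)) ^ (j : ℕ) := by
    intro i
    rw [← sub_add_sub_cancel (X i : MvPolynomial (Fin n) ℝ) (C (x i)) (C (y i)), ← C_sub,
      add_pow_eq_sum_fin _ _ (a.exponent_lt i)]
    refine Finset.sum_congr rfl fun j _ => ?_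
    rw [C_mul, C_pow, map_natCast]
    ring
  have hterm : ∀ b : Fin n → Fin m, (∏ i, C ((x i - y i) ^ (a.exponent i - b i) *
      ((a.exponent i).choose (b i) : ℝ)) * (X i - C (x i) : MvPolynomial (Fin n) ℝ) ^ (b i : ℕ)) =
      translationCoeff y x a.exponent (fun i => b i) • shiftedMonomial x fun i => b i := by
    intro b
    rw [Finset.prod_mul_distrib, smul_eq_C_mul, ← map_prod, translationCoeff, shiftedMonomial]
  rw [shiftedMonomial, Finset.prod_congr rfl fun i _ => hfactor i, Finset.prod_univ_sum,
    Fintype.piFinset_univ, Finset.sum_congr rfl fun b _ => hterm b]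
  refine (Fintype.sum_of_injective Subtype.val Subtype.val_injective
    (fun b : JetIndex m n =>
      translationCoeff y x a.exponent b.exponent • shiftedMonomial x b.exponent) _
    (fun b hb => ?_) fun _ => rfl).symm
  have hab : ∑ i, a.exponent i < ∑ i, (b i : ℕ) :=
    a.order_le.trans_lt (not_le.mp fun h => hb ⟨⟨b, h⟩, rfl⟩)
  obtain ⟨i, -, hi⟩ := Finset.exists_lt_of_sum_lt hab
  rw [translationCoeff_eq_zero y x hi, zero_smul]

theorem abs_translationCoeff_le (y x : En n) {δ : ℝ} (h : dist x y ≤ δ) {a : JetIndex m n}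
    {b : Fin n → ℕ} (hb : ∀ i, b i ≤ a.exponent i) :
    |translationCoeff y x a.exponent b| ≤ 2 ^ (m * n) * δ ^ (a.order - ∑ i, b i) := by
  have hcoord : ∀ i, |x i - y i| ≤ δ := fun i =>
    (PiLp.norm_apply_le (x - y) i).trans ((dist_eq_norm x y).symm.trans_le h)
  have hchoose : ∀ i, ((a.exponent i).choose (b i) : ℝ) ≤ 2 ^ m := fun i => by
    exact_mod_cast (Nat.choose_le_two_pow _ _).trans
      (Nat.pow_le_pow_right two_pos (a.exponent_lt i).le)
  calc |translationCoeff y x a.exponent b|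
      = ∏ i, ((a.exponent i).choose (b i) : ℝ) * |x i - y i| ^ (a.exponent i - b i) := by
        rw [translationCoeff, Finset.abs_prod]
        refine Finset.prod_congr rfl fun i _ => ?_
        rw [abs_mul, abs_pow, Nat.abs_cast, mul_comm]
    _ ≤ ∏ i : Fin n, 2 ^ m * δ ^ (a.exponent i - b i) :=
        Finset.prod_le_prod (fun i _ => by positivity) fun i _ =>
          mul_le_mul (hchoose i) (pow_le_pow_left₀ (abs_nonneg _) (hcoord i) _) (by positivity)
            (by positivity)
    _ = 2 ^ (m * n) * δ ^ (a.order - ∑ i, b i) := by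
        rw [Finset.prod_mul_distrib, Finset.prod_pow_eq_pow_sum, Finset.prod_pow_eq_pow_sum,
          Finset.sum_const, Finset.card_univ, Fintype.card_fin, smul_eq_mul, mul_comm n,
          JetIndex.order, Finset.sum_tsub_distrib _ fun i _ => hb i]

end Polynomials

section JetSpace

open MvPolynomial

variable {m n D : ℕ}

theorem totalDegree_shiftedMonomial_le (y : En n) (a : Fin n → ℕ) :
    (shiftedMonomial y a).totalDegree ≤ ∑ i, a i :=
  (totalDegree_finsetProd _ _).trans <| Finset.sum_le_sum fun i _ =>
    (totalDegree_pow _ _).trans <| (Nat.mul_le_mul_left _ <|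
      (totalDegree_sub_C_le _ _).trans (totalDegree_X i).le).trans_eq (mul_one _)

theorem exists_eq_sum_shiftedMonomial (hm : 1 ≤ m) (y : En n) {p : MvPolynomial (Fin n) ℝ}
    (hp : p.totalDegree ≤ m - 1) :
    ∃ c : JetIndex m n → ℝ, ∑ a, c a • shiftedMonomial y a.exponent = p := by
  rw [← Submodule.mem_span_range_iff_exists_fun ℝ, as_sum p]
  refine Submodule.sum_mem _ fun s hs => ?_
  have hs' : ∑ i, s i < m := by
    have hle := (le_totalDegree hs).trans hp
    rw [Finsupp.sum_fintype _ _ fun _ => rfl] at hle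
    exact hle.trans_lt (Nat.sub_one_lt_of_lt hm)
  obtain ⟨a, ha⟩ := JetIndex.exists_exponent_eq hs'
  have hmon : monomial s (coeff s p) = coeff s p • shiftedMonomial 0 a.exponent := by
    rw [monomial_eq, Finsupp.prod_fintype _ _ fun _ => pow_zero _, smul_eq_C_mul,
      shiftedMonomial, ha]
    simp
  rw [hmon, shiftedMonomial_eq_sum 0 y]
  exact Submodule.smul_mem _ _ <| Submodule.sum_mem _ fun b _ =>
    Submodule.smul_mem _ _ (Submodule.subset_span ⟨b, rfl⟩)

/-- The space `𝒫⃗` of `D`-tuples of polynomials of degree at most `m - 1`. -/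
abbrev JetSpace (m n D : ℕ) : Type := Fin D → restrictTotalDegree (Fin n) ℝ (m - 1)

theorem finrank_jetSpace_le (hm : 1 ≤ m) :
    Module.finrank ℝ (JetSpace m n D) ≤ D * (n + m - 1).choose n := by
  have hspan : restrictTotalDegree (Fin n) ℝ (m - 1) ≤
      Submodule.span ℝ (Set.range fun a : JetIndex m n => shiftedMonomial 0 a.exponent) := by
    intro p hp
    rw [Submodule.mem_span_range_iff_exists_fun]
    exact exists_eq_sum_shiftedMonomial hm 0 ((mem_restrictTotalDegree _ _ _).mp hp)
  have : FiniteDimensional ℝ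
      (Submodule.span ℝ
        (Set.range fun a : JetIndex m n => shiftedMonomial (0 : En n) a.exponent)) :=
    FiniteDimensional.span_of_finite ℝ (Set.finite_range _)
  rw [Module.finrank_pi_fintype, Finset.sum_const, Finset.card_univ, Fintype.card_fin, smul_eq_mul]
  exact Nat.mul_le_mul_left _ <| (Submodule.finrank_mono hspan).trans <|
    (finrank_range_le_card _).trans (JetIndex.card_le_choose hm)

/-- The monomials `(X - e.1)^a`, one component at a time, weighted by the power of the scale `e.2`
that makes Taylor's theorem at that scale a bound on coefficients. -/
def jetFrame (e : En n × Set.Ioc (0 : ℝ) 1) (i : JetIndex m n × Fin D) : JetSpace m n D :=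
  Pi.single i.2 ⟨(e.2 : ℝ) ^ (m - i.1.order) • shiftedMonomial e.1 i.1.exponent,
    Submodule.smul_mem _ _ <| (mem_restrictTotalDegree _ _ _).mpr <|
      (totalDegree_shiftedMonomial_le _ _).trans i.1.order_le⟩

theorem jetFrame_apply (e : En n × Set.Ioc (0 : ℝ) 1) (a : JetIndex m n) (j k : Fin D) :
    (jetFrame e (a, j) k : MvPolynomial (Fin n) ℝ) =
      if k = j then (e.2 : ℝ) ^ (m - a.order) • shiftedMonomial e.1 a.exponent else 0 := by
  split_ifs with h
  · subst h
    rw [jetFrame, Pi.single_eq_same]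
  · rw [jetFrame, Pi.single_eq_of_ne h, ZeroMemClass.coe_zero]

theorem linearCombination_jetFrame_apply (e : En n × Set.Ioc (0 : ℝ) 1)
    (c : JetIndex m n × Fin D → ℝ) (k : Fin D) :
    (Fintype.linearCombination ℝ (jetFrame e) c k : MvPolynomial (Fin n) ℝ) =
      ∑ a, (c (a, k) * (e.2 : ℝ) ^ (m - a.order)) • shiftedMonomial e.1 a.exponent := by
  rw [Fintype.linearCombination_apply, Finset.sum_apply, AddSubmonoidClass.coe_finsetSum,
    Fintype.sum_prod_type]
  refine Finset.sum_congr rfl fun a _ => ?_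
  simp [jetFrame_apply, mul_smul]

theorem span_range_jetFrame (hm : 1 ≤ m) (e : En n × Set.Ioc (0 : ℝ) 1) :
    Submodule.span ℝ (Set.range (jetFrame e : JetIndex m n × Fin D → JetSpace m n D)) = ⊤ := by
  refine eq_top_iff.mpr fun w _ => ?_
  have he := e.2.2.1
  choose c hc using fun j =>
    exists_eq_sum_shiftedMonomial hm e.1 ((mem_restrictTotalDegree _ _ _).mp (w j).2)
  refine (Submodule.mem_span_range_iff_exists_fun ℝ).mpr
    ⟨fun i => c i.2 i.1 / (e.2 : ℝ) ^ (m - i.1.order), ?_⟩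
  rw [← Fintype.linearCombination_apply]
  funext j
  refine Subtype.ext ?_
  rw [linearCombination_jetFrame_apply, ← hc]
  exact Finset.sum_congr rfl fun a _ => by rw [div_mul_cancel₀ _ (by positivity)]

theorem jetFrame_eq_sum (x y : En n) (δ δ' : Set.Ioc (0 : ℝ) 1) (a : JetIndex m n) (j : Fin D) :
    jetFrame (x, δ) (a, j) = ∑ b : JetIndex m n, (translationCoeff x y a.exponent b.exponent *
      (δ : ℝ) ^ (m - a.order) / (δ' : ℝ) ^ (m - b.order)) • jetFrame (y, δ') (b, j) := by
  have hδ' := δ'.2.1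
  funext k
  refine Subtype.ext ?_
  rw [Finset.sum_apply, AddSubmonoidClass.coe_finsetSum]
  simp only [Pi.smul_apply, SetLike.val_smul, jetFrame_apply]
  split_ifs
  · rw [shiftedMonomial_eq_sum x y, Finset.smul_sum]
    refine Finset.sum_congr rfl fun b _ => ?_
    rw [smul_smul, smul_smul, div_mul_cancel₀ _ (by positivity), mul_comm]
  · simp

theorem abs_translationCoeff_mul_div_le {x y : En n} {δ δ' : ℝ} (hδ : 0 < δ) (hle : δ ≤ δ')
    (hdist : dist x y ≤ δ') (a b : JetIndex m n) :
    |translationCoeff x y a.exponent b.exponent * δ ^ (m - a.order) / δ' ^ (m - b.order)| ≤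
      2 ^ (m * n) := by
  have hδ' := hδ.trans_le hle
  rw [abs_div, abs_mul, abs_of_pos (pow_pos hδ _), abs_of_pos (pow_pos hδ' _),
    div_le_iff₀ (pow_pos hδ' _)]
  by_cases hb : ∀ i, b.exponent i ≤ a.exponent i
  · have hord : b.order ≤ a.order := Finset.sum_le_sum fun i _ => hb i
    rw [show m - b.order = a.order - b.order + (m - a.order) by have := a.order_le; omega, pow_add,
      ← mul_assoc]
    exact mul_le_mul (abs_translationCoeff_le x y (by rwa [dist_comm]) hb)
      (pow_le_pow_left₀ hδ.le hle _) (by positivity) (by positivity)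
  · obtain ⟨i, hi⟩ := not_forall.mp hb
    rw [translationCoeff_eq_zero x y (not_le.mp hi), abs_zero, zero_mul]
    positivity

theorem dualSeminorm_jetFrame_le {x y : En n} {δ δ' : Set.Ioc (0 : ℝ) 1} (hle : δ ≤ δ')
    (hdist : dist x y ≤ δ') (φ : Module.Dual ℝ (JetSpace m n D)) :
    dualSeminorm jetFrame (x, δ) φ ≤
      Fintype.card (JetIndex m n) * 2 ^ (m * n) * dualSeminorm jetFrame (y, δ') φ := by
  have hframe : ∀ (a : JetIndex m n) (j : Fin D), |φ (jetFrame (x, δ) (a, j))| ≤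
      2 ^ (m * n) * ∑ b : JetIndex m n, |φ (jetFrame (y, δ') (b, j))| := by
    intro a j
    rw [jetFrame_eq_sum x y δ δ' a j, map_sum, Finset.mul_sum]
    refine (Finset.abs_sum_le_sum_abs _ _).trans (Finset.sum_le_sum fun b _ => ?_)
    rw [map_smul, smul_eq_mul, abs_mul]
    exact mul_le_mul_of_nonneg_right
      (abs_translationCoeff_mul_div_le δ.2.1 hle hdist a b) (abs_nonneg _)
  rw [dualSeminorm_apply, dualSeminorm_apply, Fintype.sum_prod_type, Fintype.sum_prod_type]
  calc ∑ a : JetIndex m n, ∑ j, |φ (jetFrame (x, δ) (a, j))|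
      ≤ ∑ _a : JetIndex m n, ∑ j, 2 ^ (m * n) * ∑ b : JetIndex m n, |φ (jetFrame (y, δ') (b, j))| :=
        Finset.sum_le_sum fun a _ => Finset.sum_le_sum fun j _ => hframe a j
    _ = _ := by
        rw [Finset.sum_const, ← Finset.mul_sum, Finset.card_univ, nsmul_eq_mul, Finset.sum_comm,
          mul_assoc]

end JetSpace

section Taylor

open MvPolynomial

variable {m n D : ℕ}

theorem pdalpha_sub {α : Fin n → ℕ} {f g : En n → ℝ} (hf : ContDiff ℝ (∑ i, α i : ℕ) f)
    (hg : ContDiff ℝ (∑ i, α i : ℕ) g) (x : En n) :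
    pdalpha α (f - g) x = pdalpha α f x - pdalpha α g x := by
  obtain ⟨v, -, hα⟩ := exists_pdalpha_eq_iteratedFDeriv α
  rw [hα (f := f - g) (hf.sub hg), hα hf, hα hg,
    iteratedFDeriv_sub_apply hf.contDiffAt hg.contDiffAt, sub_apply]

theorem pdalpha_sum_smul {ι : Type*} [Fintype ι] {α : Fin n → ℕ} {f : ι → En n → ℝ}
    (hf : ∀ a, ContDiff ℝ (∑ i, α i : ℕ) (f a)) (c : ι → ℝ) (x : En n) :
    pdalpha α (fun z => ∑ a, c a • f a z) x = ∑ a, c a * pdalpha α (f a) x := by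
  obtain ⟨v, -, hα⟩ := exists_pdalpha_eq_iteratedFDeriv α
  rw [hα (ContDiff.sum fun a _ => (hf a).const_smul (c a)),
    iteratedFDeriv_fun_sum_apply fun a _ => ((hf a).const_smul (c a)).contDiffAt,
    sum_apply]
  refine Finset.sum_congr rfl fun a _ => ?_
  rw [iteratedFDeriv_const_smul_apply' (hf a).contDiffAt, smul_apply, smul_eq_mul, hα (hf a)]

/-- The function on `ℝ^n` defined by the polynomial `p`. -/
def polyFun (p : MvPolynomial (Fin n) ℝ) (z : En n) : ℝ := eval (fun i => z i) p

theorem contDiff_polyFun {k : WithTop ℕ∞} (p : MvPolynomial (Fin n) ℝ) :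
    ContDiff ℝ k (polyFun p) := by
  unfold polyFun
  induction p using MvPolynomial.induction_on with
  | C c => simpa only [eval_C] using contDiff_const
  | add p q hp hq => simpa only [map_add] using hp.add hq
  | mul_X p i hp =>
    simp only [map_mul, eval_X]
    exact hp.mul (by fun_prop)

theorem polyFun_sum_smul {ι : Type*} [Fintype ι] (c : ι → ℝ) (p : ι → MvPolynomial (Fin n) ℝ) :
    polyFun (∑ a, c a • p a) = fun z => ∑ a, c a • polyFun (p a) z := by
  funext z
  simp [polyFun, smul_eval]

theorem polyFun_shiftedMonomial (y : En n) (a : Fin n → ℕ) (z : En n) :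
    polyFun (shiftedMonomial y a) z = ∏ i, (z i - y i) ^ a i := by
  simp [polyFun, shiftedMonomial]

theorem pd1_polyFun_shiftedMonomial (y : En n) (a : Fin n → ℕ) (i : Fin n) :
    pd1 i (polyFun (shiftedMonomial y a)) = fun z =>
      (a i : ℝ) * polyFun (shiftedMonomial y (Function.update a i (a i - 1))) z := by
  funext z
  have hfactor : ∀ k ∈ Finset.univ, HasFDerivAt (fun z : En n => (z k - y k) ^ a k)
      ((a k • (z k - y k) ^ (a k - 1)) • (EuclideanSpace.proj k : En n →L[ℝ] ℝ)) z := fun k _ =>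
    ((EuclideanSpace.proj k : En n →L[ℝ] ℝ).hasFDerivAt.sub_const (y k)).pow (a k)
  have herase : ∏ k ∈ Finset.univ.erase i, (z k - y k) ^ Function.update a i (a i - 1) k =
      ∏ k ∈ Finset.univ.erase i, (z k - y k) ^ a k :=
    Finset.prod_congr rfl fun k hk => by rw [Function.update_of_ne (Finset.ne_of_mem_erase hk)]
  rw [pd1, funext (polyFun_shiftedMonomial y a), (HasFDerivAt.finsetProd hfactor).fderiv,
    sum_apply, Finset.sum_eq_single i (fun k _ hk => by simp [hk]) (by simp),
    polyFun_shiftedMonomial, ← Finset.mul_prod_erase _ _ (Finset.mem_univ i), herase]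
  simp only [nsmul_eq_mul, smul_apply, PiLp.proj_apply, PiLp.single_eq_same, smul_eq_mul, mul_one,
    Function.update_self]
  ring

theorem foldr_pd1_polyFun_shiftedMonomial (y : En n) (a : Fin n → ℕ) (L : List (Fin n)) :
    L.foldr pd1 (polyFun (shiftedMonomial y a)) = fun z =>
      (∏ i, (a i).descFactorial (L.count i) : ℕ) *
        polyFun (shiftedMonomial y fun i => a i - L.count i) z := by
  induction L with
  | nil => simp
  | cons i L ih =>
    have hdesc : ∏ k, (a k).descFactorial ((i :: L).count k) =
        (a i - L.count i) * ∏ k, (a k).descFactorial (L.count k) := by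
      rw [← Finset.mul_prod_erase _ _ (Finset.mem_univ i),
        ← Finset.mul_prod_erase _ (fun k => (a k).descFactorial (L.count k)) (Finset.mem_univ i),
        List.count_cons_self, Nat.descFactorial_succ, mul_assoc]
      refine congrArg _ (congrArg _ (Finset.prod_congr rfl fun k hk => ?_))
      rw [List.count_cons_of_ne (Finset.ne_of_mem_erase hk).symm]
    have hexp : (fun k => a k - (i :: L).count k) =
        Function.update (fun k => a k - L.count k) i (a i - L.count i - 1) := by
      funext k
      rcases eq_or_ne k i with rfl | hk
      · rw [List.count_cons_self, Function.update_self, Nat.sub_sub]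
      · rw [List.count_cons_of_ne hk.symm, Function.update_of_ne hk]
    funext z
    have hpd := congrFun (pd1_polyFun_shiftedMonomial y (fun k => a k - L.count k) i) z
    rw [pd1] at hpd
    rw [List.foldr_cons, ih, pd1,
      fderiv_const_mul ((contDiff_polyFun _).differentiable one_ne_zero z), smul_apply, hpd, hdesc,
      hexp]
    push_cast
    simp only [smul_eq_mul]
    ring

theorem pdalpha_polyFun_shiftedMonomial (y : En n) (a α : Fin n → ℕ) (z : En n) :
    pdalpha α (polyFun (shiftedMonomial y a)) z =
      (∏ i, (a i).descFactorial (α i) : ℕ) * polyFun (shiftedMonomial y fun i => a i - α i) z := by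
  rw [pdalpha_eq_foldr, foldr_pd1_polyFun_shiftedMonomial]
  simp only [count_directions]

theorem pdalpha_polyFun_shiftedMonomial_eq_zero (y : En n) {a α : Fin n → ℕ} {i : Fin n}
    (h : a i < α i) (z : En n) : pdalpha α (polyFun (shiftedMonomial y a)) z = 0 := by
  rw [pdalpha_polyFun_shiftedMonomial, Finset.prod_eq_zero (Finset.mem_univ i)
    (Nat.descFactorial_of_lt h), Nat.cast_zero, zero_mul]

theorem pdalpha_polyFun_shiftedMonomial_self (y : En n) (a : JetIndex m n) :
    pdalpha a.exponent (polyFun (shiftedMonomial y a.exponent)) y = a.factorial := by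
  rw [pdalpha_polyFun_shiftedMonomial, polyFun_shiftedMonomial, JetIndex.factorial]
  simp [Nat.descFactorial_self]

theorem pdalpha_polyFun_shiftedMonomial_of_ne (y : En n) {a α : Fin n → ℕ} (h : a ≠ α) :
    pdalpha α (polyFun (shiftedMonomial y a)) y = 0 := by
  obtain ⟨i, hi⟩ := Function.ne_iff.mp h
  rcases hi.lt_or_gt with hlt | hgt
  · exact pdalpha_polyFun_shiftedMonomial_eq_zero y hlt y
  · have hvanish : ∏ i, (y i - y i) ^ (a i - α i) = 0 :=
      Finset.prod_eq_zero (Finset.mem_univ i) (by simp [(Nat.sub_pos_of_lt hgt).ne'])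
    rw [pdalpha_polyFun_shiftedMonomial, polyFun_shiftedMonomial, hvanish, mul_zero]

theorem pdalpha_polyFun_sum (x : En n) (c : JetIndex m n → ℝ) (a : JetIndex m n) :
    pdalpha a.exponent (polyFun (∑ b, c b • shiftedMonomial x b.exponent)) x =
      c a * a.factorial := by
  rw [polyFun_sum_smul, pdalpha_sum_smul fun b => contDiff_polyFun _,
    Finset.sum_eq_single a (fun b _ hb => ?_) (by simp), pdalpha_polyFun_shiftedMonomial_self]
  rw [pdalpha_polyFun_shiftedMonomial_of_ne x (JetIndex.exponent_injective.ne hb), mul_zero]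

theorem pdalpha_polyFun_eq_zero (hm : 1 ≤ m) {p : MvPolynomial (Fin n) ℝ}
    (hp : p.totalDegree ≤ m - 1) {α : Fin n → ℕ} (hα : ∑ i, α i = m) (z : En n) :
    pdalpha α (polyFun p) z = 0 := by
  obtain ⟨c, rfl⟩ := exists_eq_sum_shiftedMonomial hm 0 hp
  rw [polyFun_sum_smul, pdalpha_sum_smul fun b => contDiff_polyFun _]
  refine Finset.sum_eq_zero fun b _ => ?_
  obtain ⟨i, -, hi⟩ := Finset.exists_lt_of_sum_lt <|
    (b.order_le.trans_lt (Nat.sub_one_lt_of_lt hm)).trans_eq hα.symm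
  rw [pdalpha_polyFun_shiftedMonomial_eq_zero 0 hi, mul_zero]

theorem jetScalar_eq_sum (f : En n → ℝ) (x : En n) :
    jetScalar m f x =
      ∑ a : JetIndex m n,
        (pdalpha a.exponent f x / a.factorial) • shiftedMonomial x a.exponent := by
  unfold jetScalar
  rw [Finset.sum_subtype _ (p := fun α : Fin n → Fin m => ∑ i, (α i : ℕ) ≤ m - 1) (by simp)]
  exact Finset.sum_congr rfl fun a _ => (smul_eq_C_mul _ _).symm

theorem totalDegree_jetScalar_le (f : En n → ℝ) (x : En n) :
    (jetScalar m f x).totalDegree ≤ m - 1 := by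
  rw [← mem_restrictTotalDegree, jetScalar_eq_sum]
  exact Submodule.sum_mem _ fun a _ => Submodule.smul_mem _ _ <|
    (mem_restrictTotalDegree _ _ _).mpr ((totalDegree_shiftedMonomial_le _ _).trans a.order_le)

theorem jetScalar_polyFun (hm : 1 ≤ m) {p : MvPolynomial (Fin n) ℝ} (hp : p.totalDegree ≤ m - 1)
    (x : En n) : jetScalar m (polyFun p) x = p := by
  obtain ⟨c, rfl⟩ := exists_eq_sum_shiftedMonomial hm x hp
  rw [jetScalar_eq_sum]
  refine Finset.sum_congr rfl fun a _ => ?_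
  rw [pdalpha_polyFun_sum, mul_div_cancel_right₀ _ (zero_lt_one.trans_le a.one_le_factorial).ne']

theorem pdalpha_polyFun_jetScalar (f : En n → ℝ) (x : En n) (a : JetIndex m n) :
    pdalpha a.exponent (polyFun (jetScalar m f x)) x = pdalpha a.exponent f x := by
  rw [jetScalar_eq_sum, pdalpha_polyFun_sum,
    div_mul_cancel₀ _ (zero_lt_one.trans_le a.one_le_factorial).ne']

theorem JetIndex.order_cast_le (a : JetIndex m n) : ((∑ i, a.exponent i : ℕ) : WithTop ℕ∞) ≤ m := by
  exact_mod_cast a.order_le.trans (Nat.sub_le _ _)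

theorem jetScalar_sub {f g : En n → ℝ} (hf : ContDiff ℝ m f) (hg : ContDiff ℝ m g) (x : En n) :
    jetScalar m (f - g) x = jetScalar m f x - jetScalar m g x := by
  simp only [jetScalar_eq_sum, ← Finset.sum_sub_distrib, ← sub_smul, ← sub_div]
  exact Finset.sum_congr rfl fun a _ => by
    rw [pdalpha_sub (hf.of_le a.order_cast_le) (hg.of_le a.order_cast_le)]

theorem norm_iteratedFDeriv_sub_jetScalar_le (hm : 1 ≤ m) {f : En n → ℝ} (hf : ContDiff ℝ m f)
    {M : ℝ} (hM : 0 ≤ M) (hfM : ∀ α : Fin n → ℕ, ∑ i, α i = m → ∀ z, |pdalpha α f z| ≤ M)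
    (x y : En n) {k : ℕ} (hk : k ≤ m) :
    ‖iteratedFDeriv ℝ k (f - polyFun (jetScalar m f y)) x‖ ≤ n ^ m * M * dist x y ^ (m - k) := by
  have hT : ∀ {k : WithTop ℕ∞}, ContDiff ℝ k (polyFun (jetScalar m f y)) := contDiff_polyFun _
  have hR : ContDiff ℝ m (f - polyFun (jetScalar m f y)) := hf.sub hT
  rw [dist_eq_norm]
  refine norm_iteratedFDeriv_le_of_eq_zero hR (fun k hk => ?_) (fun z => ?_) hk x
  · have hRk := hR.of_le (m := k) (by exact_mod_cast hk.le)
    refine norm_le_zero_iff.mp ((norm_iteratedFDeriv_le_of_forall_abs_pdalpha_le hRk le_rfl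
      fun α hα => ?_).trans_eq (mul_zero _))
    obtain ⟨a, rfl⟩ := JetIndex.exists_exponent_eq (hα.trans_lt hk)
    rw [pdalpha_sub (hf.of_le a.order_cast_le) hT, pdalpha_polyFun_jetScalar, sub_self, abs_zero]
  · refine norm_iteratedFDeriv_le_of_forall_abs_pdalpha_le hR hM fun α hα => ?_
    rw [pdalpha_sub (hα ▸ hf) hT, pdalpha_polyFun_eq_zero hm (totalDegree_jetScalar_le f y) hα,
      sub_zero]
    exact hfM α hα z

theorem exists_jetScalar_sub_eq_sum (hm : 1 ≤ m) {f : En n → ℝ} (hf : ContDiff ℝ m f) {M : ℝ}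
    (hM : 0 ≤ M) (hfM : ∀ α : Fin n → ℕ, ∑ i, α i = m → ∀ z, |pdalpha α f z| ≤ M) (x y : En n) :
    ∃ c : JetIndex m n → ℝ, (∀ a, |c a| ≤ n ^ m * M * dist x y ^ (m - a.order)) ∧
      ∑ a, c a • shiftedMonomial x a.exponent = jetScalar m f x - jetScalar m f y := by
  have hT : ContDiff ℝ m (polyFun (jetScalar m f y)) := contDiff_polyFun _
  refine ⟨fun a => pdalpha a.exponent (f - polyFun (jetScalar m f y)) x / a.factorial,
    fun a => ?_, ?_⟩
  · rw [abs_div, abs_of_pos (zero_lt_one.trans_le a.one_le_factorial)]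
    exact (div_le_self (abs_nonneg _) a.one_le_factorial).trans <|
      (abs_pdalpha_le_norm_iteratedFDeriv _ ((hf.sub hT).of_le a.order_cast_le) x).trans <|
        norm_iteratedFDeriv_sub_jetScalar_le hm hf hM hfM x y (a.order_le.trans (Nat.sub_le _ _))
  · rw [← jetScalar_eq_sum, jetScalar_sub hf hT,
      jetScalar_polyFun hm (totalDegree_jetScalar_le f y)]

/-- The jet `J_x F`, as an element of `𝒫⃗`. -/
def jet (m : ℕ) (F : En n → Fin D → ℝ) (x : En n) : JetSpace m n D := fun j =>
  ⟨jetD m F x j, (mem_restrictTotalDegree _ _ _).mpr (totalDegree_jetScalar_le _ _)⟩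

theorem exists_linearCombination_jetFrame_eq (e : En n × Set.Ioc (0 : ℝ) 1) {K : ℝ} (hK : 0 ≤ K)
    {c : Fin D → JetIndex m n → ℝ} (hc : ∀ j a, |c j a| ≤ K * (e.2 : ℝ) ^ (m - a.order))
    {P : JetSpace m n D} (hP : ∀ j, ∑ a, c j a • shiftedMonomial e.1 a.exponent = (P j).1) :
    ∃ d ∈ Metric.closedBall (0 : JetIndex m n × Fin D → ℝ) K,
      Fintype.linearCombination ℝ (jetFrame e) d = P := by
  have he := e.2.2.1
  refine ⟨fun i => c i.2 i.1 / (e.2 : ℝ) ^ (m - i.1.order), ?_, ?_⟩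
  · refine mem_closedBall_zero_iff.mpr ((pi_norm_le_iff_of_nonneg hK).mpr fun i => ?_)
    rw [norm_div, norm_pow, Real.norm_of_nonneg he.le, div_le_iff₀ (by positivity)]
    exact hc i.2 i.1
  · funext j
    refine Subtype.ext ?_
    rw [linearCombination_jetFrame_apply, ← hP]
    exact Finset.sum_congr rfl fun a _ => by rw [div_mul_cancel₀ _ (by positivity)]

theorem jet_mem_frameSum (hm : 1 ≤ m) {F : En n → Fin D → ℝ} (hF : ContDiff ℝ m F) {M : ℝ}
    (hM : 0 ≤ M) (hFM : CmLE m F M) {κ : ℝ} {t : ScaleTree (En n) (En n × Set.Ioc (0 : ℝ) 1)}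
    (ht : t.IsClusterTree κ) (hroot : (t.label.2 : ℝ) = 1) :
    jet m F ∈ t.frameSum jetFrame (Metric.closedBall 0 ((n + 1) ^ m * M)) := by
  have hn : (n : ℝ) ^ m * M ≤ (n + 1) ^ m * M := by gcongr; linarith
  have hF' := contDiff_pi.mp hF
  suffices h : (fun x => jet m F x - 0) ∈
      t.frameSum jetFrame (Metric.closedBall 0 ((n + 1) ^ m * M)) by simpa only [sub_zero] using h
  refine ScaleTree.mem_frameSum_of_isClusterTree (fun x z ρ hxz => ?_) ht ?_
  · choose c hc hsum using fun j =>
      exists_jetScalar_sub_eq_sum hm (hF' j) hM (fun α hα z => hFM α hα.le z j) x z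
    refine exists_linearCombination_jetFrame_eq (x, ρ) (by positivity) (fun j a => ?_) hsum
    have := ρ.2.1
    exact (hc j a).trans (by gcongr)
  · refine exists_linearCombination_jetFrame_eq t.label (by positivity) (fun j a => ?_)
      (c := fun j a => pdalpha a.exponent (fun z => F z j) t.label.1 / a.factorial)
      (fun j => by rw [sub_zero, ← jetScalar_eq_sum]; rfl)
    rw [hroot, one_pow, mul_one, abs_div, abs_of_pos (zero_lt_one.trans_le a.one_le_factorial)]
    exact (div_le_self (abs_nonneg _) a.one_le_factorial).trans <|
      (hFM _ (a.order_le.trans (Nat.sub_le _ _)) _ j).trans <|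
        le_mul_of_one_le_left hM (one_le_pow₀ (by simp))

end Taylor

section CmBounds

variable {E : Type*} [NormedAddCommGroup E] [NormedSpace ℝ E] {m : ℕ} {f g : E → ℝ} {K L : ℝ}

/-- `f` is of class `C^m` and its derivatives of order at most `m`, as multilinear maps, are bounded
by `K`. -/
structure HasCmBound (m : ℕ) (f : E → ℝ) (K : ℝ) : Prop where
  contDiff : ContDiff ℝ m f
  norm_iteratedFDeriv_le : ∀ {k : ℕ}, k ≤ m → ∀ x, ‖iteratedFDeriv ℝ k f x‖ ≤ K

namespace HasCmBound

theorem nonneg (hf : HasCmBound m f K) : 0 ≤ K :=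
  (norm_nonneg _).trans (hf.norm_iteratedFDeriv_le m.zero_le 0)

theorem mono (hf : HasCmBound m f K) (h : K ≤ L) : HasCmBound m f L :=
  ⟨hf.contDiff, fun hk x => (hf.norm_iteratedFDeriv_le hk x).trans h⟩

theorem contDiffAt (hf : HasCmBound m f K) {k : ℕ} (hk : k ≤ m) (x : E) : ContDiffAt ℝ k f x :=
  (hf.contDiff.of_le (by exact_mod_cast hk)).contDiffAt

theorem add (hf : HasCmBound m f K) (hg : HasCmBound m g L) :
    HasCmBound m (fun x => f x + g x) (K + L) :=
  ⟨hf.contDiff.add hg.contDiff, fun hk x => by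
    rw [fun_iteratedFDeriv_add_apply (hf.contDiffAt hk x) (hg.contDiffAt hk x)]
    exact norm_add_le_of_le (hf.norm_iteratedFDeriv_le hk x) (hg.norm_iteratedFDeriv_le hk x)⟩

theorem const_mul (hf : HasCmBound m f K) (c : ℝ) : HasCmBound m (fun x => c * f x) (|c| * K) :=
  ⟨contDiff_const.mul hf.contDiff, fun hk x => by
    change ‖iteratedFDeriv ℝ _ (fun x => c • f x) x‖ ≤ _
    rw [iteratedFDeriv_const_smul_apply' (hf.contDiffAt hk x), norm_smul, Real.norm_eq_abs]
    exact mul_le_mul_of_nonneg_left (hf.norm_iteratedFDeriv_le hk x) (abs_nonneg c)⟩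

theorem const (c : ℝ) : HasCmBound m (fun _ : E => c) |c| := by
  refine ⟨contDiff_const, fun {k} _ x => ?_⟩
  rcases k.eq_zero_or_pos with rfl | hk
  · simp
  · simp [iteratedFDeriv_const_of_ne hk.ne']

theorem one_sub (hf : HasCmBound m f K) : HasCmBound m (fun x => 1 - f x) (1 + K) := by
  simpa [sub_eq_add_neg] using (const 1).add (hf.const_mul (-1))

theorem mul (hf : HasCmBound m f K) (hg : HasCmBound m g L) :
    HasCmBound m (fun x => f x * g x) (2 ^ m * K * L) := by
  have hK := hf.nonneg
  have hL := hg.nonneg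
  refine ⟨hf.contDiff.mul hg.contDiff, fun {k} hk x => ?_⟩
  calc ‖iteratedFDeriv ℝ k (fun x => f x * g x) x‖
      ≤ ∑ i ∈ Finset.range (k + 1),
          (k.choose i : ℝ) * ‖iteratedFDeriv ℝ i f x‖ * ‖iteratedFDeriv ℝ (k - i) g x‖ :=
        norm_iteratedFDeriv_mul_le hf.contDiff hg.contDiff x (by exact_mod_cast hk)
    _ ≤ ∑ i ∈ Finset.range (k + 1), (k.choose i : ℝ) * K * L :=
        Finset.sum_le_sum fun i hi => by
          have hfi := hf.norm_iteratedFDeriv_le ((Finset.mem_range_succ_iff.mp hi).trans hk) x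
          have hgi := hg.norm_iteratedFDeriv_le ((k.sub_le i).trans hk) x
          gcongr
    _ = 2 ^ k * K * L := by
        rw [← Finset.sum_mul, ← Finset.sum_mul]
        congr 2
        exact_mod_cast Nat.sum_range_choose k
    _ ≤ 2 ^ m * K * L := by
        gcongr
        exact one_le_two

theorem sum {ι : Type*} {s : Finset ι} {f : ι → E → ℝ} (hf : ∀ i ∈ s, HasCmBound m (f i) K) :
    HasCmBound m (fun x => ∑ i ∈ s, f i x) (s.card * K) := by
  induction s using Finset.induction_on with
  | empty => simpa using const (m := m) (E := E) 0
  | insert a s ha ih =>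
    simp only [Finset.sum_insert ha, Finset.card_insert_of_notMem ha]
    refine ((hf a (Finset.mem_insert_self a s)).add
      (ih fun i hi => hf i (Finset.mem_insert_of_mem hi))).mono (le_of_eq ?_)
    push_cast
    ring

theorem prod {ι : Type*} {s : Finset ι} {f : ι → E → ℝ} (hf : ∀ i ∈ s, HasCmBound m (f i) K) :
    HasCmBound m (fun x => ∏ i ∈ s, f i x) ((2 ^ m * K) ^ s.card) := by
  induction s using Finset.induction_on with
  | empty => simpa using const (m := m) (E := E) 1
  | insert a s ha ih =>
    simp only [Finset.prod_insert ha, Finset.card_insert_of_notMem ha]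
    exact ((hf a (Finset.mem_insert_self a s)).mul
      (ih fun i hi => hf i (Finset.mem_insert_of_mem hi))).mono (pow_succ' _ _).ge

theorem comp_sub (hf : HasCmBound m f K) (y : E) : HasCmBound m (fun x => f (x - y)) K :=
  ⟨hf.contDiff.comp (contDiff_id.sub contDiff_const), fun hk x => by
    rw [iteratedFDeriv_comp_sub]
    exact hf.norm_iteratedFDeriv_le hk _⟩

theorem rescale (hf : HasCmBound m f K) {δ : ℝ} (hδ : δ ∈ Set.Ioc 0 1) :
    HasCmBound m (fun x => δ ^ m * f (δ⁻¹ • x)) K := by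
  have hδ₀ := hδ.1
  have hcomp : ContDiff ℝ m fun x => f (δ⁻¹ • x) := hf.contDiff.comp (contDiff_const_smul _)
  refine ⟨contDiff_const.mul hcomp, fun {k} hk x => ?_⟩
  have hk' : (k : WithTop ℕ∞) ≤ m := by exact_mod_cast hk
  change ‖iteratedFDeriv ℝ k (fun x => δ ^ m • f (δ⁻¹ • x)) x‖ ≤ K
  rw [iteratedFDeriv_const_smul_apply' (hcomp.of_le hk').contDiffAt,
    iteratedFDeriv_comp_const_smul _ (hf.contDiff.of_le hk'), smul_smul, norm_smul,
    Real.norm_of_nonneg (by positivity)]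
  have hle : δ ^ m * δ⁻¹ ^ k ≤ 1 := by
    rw [inv_pow, ← div_eq_mul_inv, div_le_one (by positivity)]
    exact pow_le_pow_of_le_one hδ₀.le hδ.2 hk
  exact (mul_le_of_le_one_left (norm_nonneg _) hle).trans (hf.norm_iteratedFDeriv_le hk _)

end HasCmBound

theorem exists_hasCmBound_of_hasCompactSupport (hf : ContDiff ℝ m f) (hs : HasCompactSupport f) :
    ∃ K, HasCmBound m f K := by
  have hbound : ∀ k : Fin (m + 1), ∃ K, ∀ x, ‖iteratedFDeriv ℝ k f x‖ ≤ K := fun k =>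
    (hs.iteratedFDeriv (𝕜 := ℝ) k).exists_bound_of_continuous
      (hf.continuous_iteratedFDeriv (by exact_mod_cast k.is_le))
  choose K hK using hbound
  obtain ⟨L, hL⟩ := Finite.exists_le K
  exact ⟨L, hf, fun {k} hk x => (hK ⟨k, Nat.lt_succ_of_le hk⟩ x).trans (hL _)⟩

variable [FiniteDimensional ℝ E] [HasContDiffBump E]

theorem exists_cutoff (m N : ℕ) {ε : ℝ} (hε : 0 < ε) :
    ∃ K, ∀ T : Finset E, T.card ≤ N → ∃ θ : E → ℝ, HasCmBound m θ K ∧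
      (∀ x ∈ T, ∀ᶠ z in nhds x, θ z = 1) ∧ ∀ z, (∀ x ∈ T, ε ≤ dist z x) → θ z = 0 := by
  let φ : ContDiffBump (0 : E) := ⟨ε / 2, ε, half_pos hε, half_lt_self hε⟩
  obtain ⟨K, hK⟩ := exists_hasCmBound_of_hasCompactSupport (m := m) φ.contDiff φ.hasCompactSupport
  have hone : 1 ≤ 2 ^ m * (1 + K) :=
    one_le_mul_of_one_le_of_one_le (one_le_pow₀ one_le_two) (le_add_of_nonneg_right hK.nonneg)
  refine ⟨1 + (2 ^ m * (1 + K)) ^ N, fun T hT =>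
    ⟨fun z => 1 - ∏ x ∈ T, (1 - φ (z - x)), ?_, fun x hx => ?_, fun z hz => ?_⟩⟩
  · exact (HasCmBound.prod fun x _ => (hK.comp_sub x).one_sub).one_sub.mono
      (add_le_add_right (pow_le_pow_right₀ hone hT) 1)
  · filter_upwards [Metric.ball_mem_nhds x (half_pos hε)] with z hz
    have hφ : φ (z - x) = 1 := φ.one_of_mem_closedBall <| mem_closedBall_zero_iff.mpr <|
      (dist_eq_norm z x).symm.trans_le hz.le
    rw [Finset.prod_eq_zero hx (by rw [hφ, sub_self]), sub_zero]
  · have hφ : ∀ x ∈ T, 1 - φ (z - x) = 1 := fun x hx => by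
      rw [φ.zero_of_le_dist ((hz x hx).trans_eq (by rw [dist_zero_right, dist_eq_norm])), sub_zero]
    exact sub_eq_zero_of_eq (Finset.prod_eq_one hφ).symm

theorem exists_localization (N : ℕ) {ε : ℝ} (hε : 0 < ε) (hf : ContDiff ℝ m f) :
    ∃ K, ∀ T : Finset E, T.card ≤ N → (∀ x ∈ T, ‖x‖ ≤ 1) → ∃ h : E → ℝ, HasCmBound m h K ∧
      (∀ x ∈ T, ∀ᶠ z in nhds x, h z = f z) ∧ ∀ z, (∀ x ∈ T, ε ≤ dist z x) → h z = 0 := by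
  let χ : ContDiffBump (0 : E) := ⟨2, 3, two_pos, by norm_num⟩
  obtain ⟨K, hK⟩ := exists_hasCmBound_of_hasCompactSupport (hf.mul χ.contDiff)
    (χ.hasCompactSupport.mul_left (f := f))
  obtain ⟨L, hL⟩ := exists_cutoff (E := E) m N hε
  refine ⟨2 ^ m * K * L, fun T hT hT₁ => ?_⟩
  obtain ⟨θ, hθ, hθ₁, hθ₀⟩ := hL T hT
  refine ⟨fun z => f z * χ z * θ z, hK.mul hθ, fun x hx => ?_, fun z hz => ?_⟩
  · have hx₂ : Metric.ball (0 : E) 2 ∈ nhds x :=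
      Metric.isOpen_ball.mem_nhds (mem_ball_zero_iff.mpr ((hT₁ x hx).trans_lt one_lt_two))
    filter_upwards [hθ₁ x hx, hx₂] with z hθz hz
    rw [hθz, χ.one_of_mem_closedBall (Metric.ball_subset_closedBall hz), mul_one, mul_one]
  · simp only [hθ₀ z hz, mul_zero]

theorem exists_rescaled_localization (N : ℕ) {ε : ℝ} (hε : 0 < ε) (hf : ContDiff ℝ m f) :
    ∃ K, ∀ (y : E) (δ : Set.Ioc (0 : ℝ) 1) (T : Finset E), T.card ≤ N →
      (∀ x ∈ T, dist x y ≤ δ) → ∃ h : E → ℝ, HasCmBound m h K ∧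
        (∀ x ∈ T, ∀ᶠ z in nhds x, h z = (δ : ℝ) ^ m * f ((δ : ℝ)⁻¹ • (z - y))) ∧
        ∀ z, (∀ x ∈ T, ε * δ ≤ dist z x) → h z = 0 := by
  obtain ⟨K, hK⟩ := exists_localization N hε hf
  refine ⟨K, fun y δ T hT hTy => ?_⟩
  have hδ := δ.2.1
  let s : E → E := fun z => (δ : ℝ)⁻¹ • (z - y)
  have hs : Continuous s := by fun_prop
  have hnorm : ∀ z, ‖s z‖ = dist z y / δ := fun z => by
    rw [norm_smul, norm_inv, Real.norm_of_nonneg hδ.le, ← dist_eq_norm, inv_mul_eq_div]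
  have hdist : ∀ z x, dist (s z) (s x) = dist z x / δ := fun z x => by
    rw [dist_smul₀, dist_sub_right, norm_inv, Real.norm_of_nonneg hδ.le, inv_mul_eq_div]
  obtain ⟨h, hh, hh₁, hh₀⟩ := hK (T.image s) (Finset.card_image_le.trans hT) <|
    Finset.forall_mem_image.mpr fun x hx => by
      rw [hnorm, div_le_one hδ]
      exact hTy x hx
  refine ⟨fun z => (δ : ℝ) ^ m * h (s z), (hh.rescale δ.2).comp_sub y, fun x hx => ?_,
    fun z hz => ?_⟩
  · filter_upwards [hs.continuousAt.eventually (hh₁ _ (Finset.mem_image_of_mem s hx))] with z hz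
    rw [hz]
  · refine mul_eq_zero_of_right _ (hh₀ (s z) (Finset.forall_mem_image.mpr fun x hx => ?_))
    rw [hdist, le_div_iff₀ hδ]
    exact hz x hx

end CmBounds

section Extension

open MvPolynomial

variable {m n D : ℕ} {T T' : Finset (En n)} {r r' K L : ℝ} {P Q : En n → JetSpace m n D}
  {F G : En n → Fin D → ℝ}

/-- `F` is a `C^m` function with derivatives bounded by `K` that coincides with the polynomial `P x`
near each point `x` of `T` and vanishes at distance at least `r` from `T`. -/
structure IsLocalRealization (T : Finset (En n)) (r : ℝ) (P : En n → JetSpace m n D)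
    (F : En n → Fin D → ℝ) (K : ℝ) : Prop where
  hasCmBound : ∀ j, HasCmBound m (fun z => F z j) K
  eventually_eq : ∀ x ∈ T, ∀ᶠ z in nhds x, ∀ j, F z j = polyFun (P x j) z
  eq_zero : ∀ z, (∀ x ∈ T, r ≤ dist z x) → F z = 0

namespace IsLocalRealization

theorem mono_bound (hF : IsLocalRealization T r P F K) (h : K ≤ L) : IsLocalRealization T r P F L :=
  ⟨fun j => (hF.hasCmBound j).mono h, hF.eventually_eq, hF.eq_zero⟩

theorem mono_radius (hF : IsLocalRealization T r P F K) (h : r ≤ r') :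
    IsLocalRealization T r' P F K :=
  ⟨hF.hasCmBound, hF.eventually_eq, fun z hz => hF.eq_zero z fun x hx => h.trans (hz x hx)⟩

theorem add (hF : IsLocalRealization T r P F K) (hG : IsLocalRealization T r Q G L) :
    IsLocalRealization T r (P + Q) (F + G) (K + L) where
  hasCmBound j := (hF.hasCmBound j).add (hG.hasCmBound j)
  eventually_eq x hx := by
    filter_upwards [hF.eventually_eq x hx, hG.eventually_eq x hx] with z hFz hGz j
    simp [hFz j, hGz j, polyFun]
  eq_zero z hz := by rw [Pi.add_apply, hF.eq_zero z hz, hG.eq_zero z hz, add_zero]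

theorem eventually_eq_zero (hF : IsLocalRealization T r P F K) {x : En n}
    (hx : ∀ y ∈ T, r < dist x y) : ∀ᶠ z in nhds x, F z = 0 := by
  have hfar : ∀ᶠ z in nhds x, ∀ y ∈ T, r < dist z y :=
    (Filter.eventually_all_finset T).mpr fun y hy =>
      (continuous_id.dist continuous_const).continuousAt.eventually (lt_mem_nhds (hx y hy))
  exact hfar.mono fun z hz => hF.eq_zero z fun y hy => (hz y hy).le

theorem union {_ : DecidableEq (En n)} (hF : IsLocalRealization T r P F K)
    (hG : IsLocalRealization T' r P G L)
    (hsep : ∀ x ∈ T, ∀ y ∈ T', r < dist x y) :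
    IsLocalRealization (T ∪ T') r P (F + G) (K + L) where
  hasCmBound j := (hF.hasCmBound j).add (hG.hasCmBound j)
  eventually_eq x hx := by
    rcases Finset.mem_union.mp hx with hx | hx
    · filter_upwards [hF.eventually_eq x hx, hG.eventually_eq_zero (hsep x hx)] with z hFz hGz j
      rw [Pi.add_apply, hGz, add_zero, hFz]
    · have hsep' : ∀ y ∈ T, r < dist x y := fun y hy => dist_comm y x ▸ hsep y hy x hx
      filter_upwards [hF.eventually_eq_zero hsep', hG.eventually_eq x hx] with z hFz hGz j
      rw [Pi.add_apply, hFz, zero_add, hGz]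
  eq_zero z hz := by
    rw [Pi.add_apply, hF.eq_zero z fun x hx => hz x (Finset.mem_union_left _ hx),
      hG.eq_zero z fun x hx => hz x (Finset.mem_union_right _ hx), add_zero]

theorem cmLE (hF : IsLocalRealization T r P F K) : CmLE m F K := fun α hα x j =>
  (abs_pdalpha_le_norm_iteratedFDeriv α
    ((hF.hasCmBound j).contDiff.of_le (by exact_mod_cast hα)) x).trans
    ((hF.hasCmBound j).norm_iteratedFDeriv_le hα x)

theorem contDiff (hF : IsLocalRealization T r P F K) : ContDiff ℝ m F :=
  contDiff_pi.mpr fun j => (hF.hasCmBound j).contDiff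

theorem jetD_eq (hm : 1 ≤ m) (hF : IsLocalRealization T r P F K) {x : En n} (hx : x ∈ T) :
    jetD m F x = fun j => (P x j : MvPolynomial (Fin n) ℝ) := by
  funext j
  have hdeg := (mem_restrictTotalDegree _ _ _).mp (P x j).2
  rw [jetD, ← jetScalar_polyFun hm hdeg x, jetScalar_eq_sum, jetScalar_eq_sum]
  refine Finset.sum_congr rfl fun a _ => ?_
  rw [pdalpha_eq_of_eventuallyEq a.exponent
    ((hF.hasCmBound j).contDiff.of_le a.order_cast_le) (contDiff_polyFun _)
    ((hF.eventually_eq x hx).mono fun z hz => hz j)]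

end IsLocalRealization

theorem polyFun_shiftedMonomial_rescale {δ : ℝ} (hδ : δ ≠ 0) (y z : En n) (a : JetIndex m n) :
    δ ^ m * polyFun (shiftedMonomial 0 a.exponent) (δ⁻¹ • (z - y)) =
      δ ^ (m - a.order) * polyFun (shiftedMonomial y a.exponent) z := by
  have hscale : polyFun (shiftedMonomial 0 a.exponent) (δ⁻¹ • (z - y)) =
      δ⁻¹ ^ a.order * polyFun (shiftedMonomial y a.exponent) z := by
    rw [polyFun_shiftedMonomial, polyFun_shiftedMonomial, JetIndex.order,
      ← Finset.prod_pow_eq_pow_sum, ← Finset.prod_mul_distrib]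
    exact Finset.prod_congr rfl fun i _ => by simp [mul_pow]
  rw [hscale, ← mul_assoc, inv_pow, pow_sub₀ δ hδ (a.order_le.trans (m.sub_le 1))]

theorem exists_localized_jetFrame (m n D N : ℕ) {ε : ℝ} (hε : 0 < ε) :
    ∃ K, 0 ≤ K ∧ ∀ {M : ℝ}, ∀ (e : En n × Set.Ioc (0 : ℝ) 1) (T : Finset (En n)), T.card ≤ N →
      (∀ x ∈ T, dist x e.1 ≤ e.2) →
      ∀ c ∈ Metric.closedBall (0 : JetIndex m n × Fin D → ℝ) M,
        ∃ F, IsLocalRealization T (ε * e.2)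
          (fun _ => Fintype.linearCombination ℝ (jetFrame e) c) F (K * M) := by
  choose K hK using fun a : JetIndex m n => exists_rescaled_localization (m := m) N hε
    (contDiff_polyFun (shiftedMonomial (0 : En n) a.exponent))
  obtain ⟨L, hL⟩ := Finite.exists_le K
  refine ⟨Fintype.card (JetIndex m n) * |L|, by positivity, fun {M} e T hT hTe c hc => ?_⟩
  choose h hh hh₁ hh₀ using fun a => hK a e.1 e.2 T hT hTe
  refine ⟨fun z j => ∑ a, c (a, j) * h a z, fun j => ?_, fun x hx => ?_, fun z hz => ?_⟩
  · refine (HasCmBound.sum fun a _ => (((hh a).mono (hL a)).mono (le_abs_self L)).const_mul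
      (c (a, j)) |>.mono (L := |L| * M) ?_).mono (mul_assoc _ _ _).ge
    rw [mul_comm]
    exact mul_le_mul_of_nonneg_left
      ((norm_le_pi_norm c (a, j)).trans (mem_closedBall_zero_iff.mp hc)) (abs_nonneg L)
  · filter_upwards [Filter.eventually_all.mpr fun a => hh₁ a x hx] with z hz j
    rw [linearCombination_jetFrame_apply, polyFun_sum_smul]
    refine Finset.sum_congr rfl fun a _ => ?_
    rw [hz, polyFun_shiftedMonomial_rescale e.2.2.1.ne', smul_eq_mul, mul_assoc]
  · funext j
    exact Finset.sum_eq_zero fun a _ => by rw [hh₀ a z hz, mul_zero]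

/-- The functions attached to the two children of a vertex do not interact, because the clusters of
the children are separated by a multiple of their scale. -/
theorem ScaleTree.exists_isLocalRealization {κ : ℝ} (hκ : 0 < κ)
    {B : Set (JetIndex m n × Fin D → ℝ)} {N : ℕ}
    (hB : ∀ (e : En n × Set.Ioc (0 : ℝ) 1) (T : Finset (En n)), T.card ≤ N →
      (∀ x ∈ T, dist x e.1 ≤ e.2) → ∀ c ∈ B, ∃ F, IsLocalRealization T (κ / 2 * e.2)
        (fun _ => Fintype.linearCombination ℝ (jetFrame e) c) F K) :
    ∀ {t : ScaleTree (En n) (En n × Set.Ioc (0 : ℝ) 1)} {P : En n → JetSpace m n D},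
      t.IsClusterTree κ → t.leaves.card ≤ N → (∀ x ∈ t.leaves, dist x t.label.1 ≤ t.label.2) →
      P ∈ t.frameSum jetFrame B →
      ∃ F, IsLocalRealization t.leaves (κ / 2 * t.label.2) P F ((2 * t.leaves.card - 1) * K)
  | leaf e x, P, _, hN, hdist, ⟨c, hc, hP⟩ => by
    obtain ⟨F, hF⟩ := hB e {x} hN hdist c hc
    refine ⟨F, fun j => (hF.hasCmBound j).mono (by simp [leaves]; linarith), fun y hy => ?_,
      hF.eq_zero⟩
    obtain rfl := Finset.mem_singleton.mp hy
    simpa only [hP] using hF.eventually_eq y hy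
  | node e l r, P, ⟨_, hdisj, hscale, hle, hdiam, hsep, hl, hr⟩, hN, hdist, ⟨c, hc, hPl, hPr⟩ => by
    have hls : l.leaves ⊆ (node e l r).leaves := leaves_left_subset
    have hrs : r.leaves ⊆ (node e l r).leaves := leaves_right_subset
    obtain ⟨H, hH⟩ := hB e _ hN hdist c hc
    obtain ⟨F, hF⟩ := exists_isLocalRealization hκ hB hl ((Finset.card_le_card hls).trans hN)
      (fun x hx => hdiam x (hls hx) _ (hls hl.label_fst_mem_leaves)) hPl
    obtain ⟨G, hG⟩ := exists_isLocalRealization hκ hB hr ((Finset.card_le_card hrs).trans hN)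
      (fun x hx => hscale ▸ hdiam x (hrs hx) _ (hrs hr.label_fst_mem_leaves)) hPr
    rw [hscale] at hG
    have hpos : 0 < κ * l.label.2 := mul_pos hκ l.label.2.2.1
    have hFG : IsLocalRealization (node e l r).leaves (κ / 2 * l.label.2) _ _ _ :=
      hF.union hG fun x hx y hy =>
        (by linarith : κ / 2 * l.label.2 < κ * l.label.2).trans_le (hsep x hx y hy)
    have hFG' := hFG.mono_radius (mul_le_mul_of_nonneg_left hle (half_pos hκ).le)
    have hsum := (hH.add hFG').mono_bound (L := (2 * (node e l r).leaves.card - 1) * K)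
      (by rw [card_leaves_node hdisj]; push_cast; linarith)
    exact ⟨H + (F + G), by simpa [label, Pi.add_def] using hsum⟩

end Extension

section Selection

variable {m n D : ℕ} {S : Finset (En n)} {G : En n → Set (Fin D → MvPolynomial (Fin n) ℝ)} {M : ℝ}

/-- Some `C^m` function of norm at most `M` has its jet at each point `x` of `S` in `G x`. -/
def HasSelection (m : ℕ) (G : En n → Set (Fin D → MvPolynomial (Fin n) ℝ)) (S : Finset (En n))
    (M : ℝ) : Prop :=
  ∃ F : En n → Fin D → ℝ, ContDiff ℝ m F ∧ CmLE m F M ∧ ∀ x ∈ S, jetD m F x ∈ G x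

theorem HasSelection.mono {M' : ℝ} (h : M ≤ M') : HasSelection m G S M → HasSelection m G S M' :=
  fun ⟨F, hF, hFM, hFG⟩ => ⟨F, hF, fun α hα x j => (hFM α hα x j).trans h, hFG⟩

theorem exists_hasSelection_of_mem_frameSum (D : ℕ) (hm : 1 ≤ m) (N : ℕ) {κ : ℝ} (hκ : 0 < κ) :
    ∃ K, 1 ≤ K ∧ ∀ {t : ScaleTree (En n) (En n × Set.Ioc (0 : ℝ) 1)}, t.IsClusterTree κ →
      t.leaves.card ≤ N → (∀ x ∈ t.leaves, dist x t.label.1 ≤ t.label.2) →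
      ∀ {G : En n → Set (Fin D → MvPolynomial (Fin n) ℝ)} {M : ℝ}, 0 ≤ M →
      ∀ P ∈ t.frameSum (jetFrame (m := m)) (Metric.closedBall 0 M),
      (∀ x ∈ t.leaves, (fun j => (P x j : MvPolynomial (Fin n) ℝ)) ∈ G x) →
      HasSelection m G t.leaves (K * M) := by
  obtain ⟨K, hK, hB⟩ := exists_localized_jetFrame m n D N (half_pos hκ)
  refine ⟨2 * N * K + 1, le_add_of_nonneg_left (by positivity), ?_⟩
  intro t ht hN hdist G M hM P hP hG
  obtain ⟨F, hF⟩ := ScaleTree.exists_isLocalRealization hκ hB ht hN hdist hP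
  have hcard : (t.leaves.card : ℝ) ≤ N := by exact_mod_cast hN
  have hbound : (2 * t.leaves.card - 1) * (K * M) ≤ (2 * N * K + 1) * M := by
    nlinarith [mul_nonneg hK hM]
  exact ⟨F, hF.contDiff, (hF.mono_bound hbound).cmLE, fun x hx => hF.jetD_eq hm hx ▸ hG x hx⟩

theorem isComparable_dualSeminorm_jetFrame {t : ScaleTree (En n) (En n × Set.Ioc (0 : ℝ) 1)} {κ : ℝ}
    (ht : t.IsClusterTree κ) :
    t.IsComparable (dualSeminorm (jetFrame (m := m) (D := D)))
      (max 1 (Fintype.card (JetIndex m n) * 2 ^ (m * n))) :=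
  ht.isComparable fun _ _ _ _ hle hdist φ => (dualSeminorm_jetFrame_le hle hdist φ).trans <|
    mul_le_mul_of_nonneg_right (le_max_right _ _) (apply_nonneg _ φ)

theorem exists_hasSelection_of_forall_erase (n D : ℕ) (hm : 1 ≤ m) (N : ℕ) :
    ∃ C, 1 ≤ C ∧ ∀ {S : Finset (En n)} {G : En n → Set (Fin D → MvPolynomial (Fin n) ℝ)} {M : ℝ},
      S.card ≤ N → (∀ x ∈ S, ∀ y ∈ S, dist x y ≤ 1) → (∀ x ∈ S, Convex ℝ (G x)) →
      2 ^ (D * (n + m - 1).choose n) < S.card → 0 < M →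
      (∀ x ∈ S, HasSelection m G (S.erase x) M) → HasSelection m G S (C * M) := by
  rcases N.eq_zero_or_pos with rfl | hN
  · exact ⟨1, le_rfl, fun hS _ _ hlt => absurd (hlt.trans_le hS) (Nat.not_lt_zero _)⟩
  obtain ⟨K, hK, hextend⟩ := exists_hasSelection_of_mem_frameSum (n := n) D hm N
    (inv_pos.mpr (Nat.cast_pos.mpr hN) : (0 : ℝ) < (N : ℝ)⁻¹)
  obtain ⟨C, hC, hselect⟩ := ScaleTree.exists_mem_frameSum_of_forall_ne
    (W := JetSpace m n D) (α := En n) (ε := En n × Set.Ioc (0 : ℝ) 1) (ι := JetIndex m n × Fin D)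
    (le_max_left 1 ((Fintype.card (JetIndex m n) : ℝ) * 2 ^ (m * n))) N
  refine ⟨K * (C * (n + 1) ^ m), one_le_mul_of_one_le_of_one_le hK
    (one_le_mul_of_one_le_of_one_le hC (one_le_pow₀ (by simp))), ?_⟩
  intro S G M hS hdiam hG hlt hM herase
  obtain ⟨c, hc⟩ := Finset.card_pos.mp ((Nat.zero_le _).trans_lt hlt)
  obtain ⟨t, rfl, hroot, ht⟩ :=
    ScaleTree.exists_isClusterTree S hS hc ⟨1, one_pos, le_rfl⟩ hdiam
  let toPoly : JetSpace m n D →ₗ[ℝ] Fin D → MvPolynomial (Fin n) ℝ :=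
    LinearMap.pi fun j => (Submodule.subtype _).comp (LinearMap.proj j)
  obtain ⟨P, hP, hPG⟩ := hselect (M := (n + 1) ^ m * M) (span_range_jetFrame hm) hS
    ((Nat.pow_le_pow_right two_pos (finrank_jetSpace_le hm)).trans_lt hlt)
    (isComparable_dualSeminorm_jetFrame ht) (G := fun x => toPoly ⁻¹' G x)
    (fun x hx => (hG x hx).linear_preimage toPoly)
    (by positivity) fun x hx => by
      obtain ⟨F, hF, hFM, hFG⟩ := herase x hx
      exact ⟨jet m F, jet_mem_frameSum hm hF hM.le hFM ht (by rw [hroot]),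
        fun y hy hyx => hFG y (Finset.mem_erase.mpr ⟨hyx, hy⟩)⟩
  have hsel := hextend ht hS (fun x hx => by rw [hroot]; exact hdiam x hx c hc) (by positivity)
    P hP hPG
  exact hsel.mono (le_of_eq (by ring))

end Selection

theorem exists_forall_of_forall_erase {α ι : Type*} [DecidableEq α]
    {p : ι → Finset α → ℝ → Prop} {k : ℕ}
    (hmono : ∀ i S, Monotone (p i S))
    (herase : ∀ N, ∃ C : ℝ, 1 ≤ C ∧ ∀ i S, S.card ≤ N → k < S.card → ∀ M, 0 < M →
      (∀ x ∈ S, p i (S.erase x) M) → p i S (C * M)) (N : ℕ) :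
    ∃ γ : ℝ, 1 ≤ γ ∧ ∀ i S, S.card ≤ N → (∀ S' ⊆ S, S'.card ≤ k → p i S' 1) → p i S γ := by
  induction N with
  | zero => exact ⟨1, le_rfl, fun i S hS hp => hp S subset_rfl (hS.trans k.zero_le)⟩
  | succ N ih =>
    obtain ⟨γ, hγ, hN⟩ := ih
    obtain ⟨C, hC, hstep⟩ := herase (N + 1)
    have hCγ : 1 ≤ C * γ := one_le_mul_of_one_le_of_one_le hC hγ
    refine ⟨C * γ, hCγ, fun i S hS hp => ?_⟩
    rcases le_or_gt S.card k with hk | hk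
    · exact hmono i S hCγ (hp S subset_rfl hk)
    · refine hstep i S hS hk γ (one_pos.trans_le hγ) fun x hx => hN i _ ?_ fun S' hS' =>
        hp S' (hS'.trans (S.erase_subset x))
      rw [Finset.card_erase_of_mem hx]
      omega

/-- **Weak finiteness principle for `C^m` jet selection** (Theorem 1.4, `C^m` flavor):
the finiteness constant is `2^(dim 𝒫⃗) = 2^(D·binom(n+m-1,n))`, and `γ` depends only on
`m, n, D` and a bound `N` on `|S|`. -/
theorem weak_finiteness_principle_Cm
    (m n D : ℕ) (hm : 1 ≤ m) (hn : 1 ≤ n) (hD : 1 ≤ D) (N : ℕ) (hN : 0 < N) :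
    ∃ γ : ℝ, 0 < γ ∧
      ∀ S : Finset (En n), S.card ≤ N → (∀ x ∈ S, ∀ y ∈ S, dist x y ≤ 1) →
        ∀ G : En n → Set (Fin D → MvPolynomial (Fin n) ℝ),
          (∀ x ∈ S, Convex ℝ (G x)) →
          (∀ x ∈ S, ∀ P ∈ G x, ∀ j, (P j).totalDegree ≤ m - 1) →
          (∀ S' : Finset (En n), S' ⊆ S → S'.card ≤ 2 ^ (D * Nat.choose (n + m - 1) n) →
            ∃ F : En n → Fin D → ℝ, ContDiff ℝ m F ∧ CmLE m F 1 ∧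
              ∀ x ∈ S', jetD m F x ∈ G x) →
          ∃ F : En n → Fin D → ℝ, ContDiff ℝ m F ∧ CmLE m F γ ∧
            ∀ x ∈ S, jetD m F x ∈ G x := by
  let p (G : En n → Set (Fin D → MvPolynomial (Fin n) ℝ)) (S : Finset (En n)) (M : ℝ) : Prop :=
    (∀ x ∈ S, ∀ y ∈ S, dist x y ≤ 1) → (∀ x ∈ S, Convex ℝ (G x)) → HasSelection m G S M
  have hmono : ∀ G S, Monotone (p G S) := fun G S _ _ h hsel hdiam hG => (hsel hdiam hG).mono h
  obtain ⟨γ, hγ, hselect⟩ := exists_forall_of_forall_erase hmono (fun s => by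
    obtain ⟨C, hC, herase⟩ := exists_hasSelection_of_forall_erase n D hm s
    refine ⟨C, hC, fun G S hS hlt M hM hsel hdiam hG => herase hS hdiam hG hlt hM fun x hx => ?_⟩
    have hsub := S.erase_subset x
    exact hsel x hx (fun y hy z hz => hdiam y (hsub hy) z (hsub hz)) fun y hy => hG y (hsub hy)) N
  exact ⟨γ, one_pos.trans_le hγ, fun S hS hdiam G hG _ hF =>
    hselect G S hS (fun S' hS' hcard _ _ => hF S' hS' hcard) hdiam hG⟩

end
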